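/- arXiv:1908.09789 — 9 statements merged into one kernel-verified Lean document; each statement's English description precedes it below -/
import Mathlib

section
/- Let B be an open subset of the half-plane ℍ = {(H,r) ∈ ℝ² : r > 0}, let ξ₁, ξ₂ : B → ℝ be C¹ functions, and let x₁, x₂ : B → ℝ be C² functions satisfying ∂x₁/∂H = r·∂ξ₂/∂r, ∂x₁/∂r = −r·∂ξ₂/∂H, ∂x₂/∂H = −r·∂ξ₁/∂r, ∂x₂/∂r = r·∂ξ₁/∂H on B. Then the 1-form ξ₁ dx₁ + ξ₂ dx₂ is closed on B; explicitly, at every point of B one has ∂/∂r ( ξ₁·∂x₁/∂H + ξ₂·∂x₂/∂H ) = ∂/∂H ( ξ₁·∂x₁/∂r + ξ₂·∂x₂/∂r ). -/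
/-- Partial derivative in the first (`H`) direction of a function on `ℝ × ℝ`. -/
noncomputable def pdH (f : ℝ × ℝ → ℝ) (p : ℝ × ℝ) : ℝ := fderiv ℝ f p (1, 0)

/-- Partial derivative in the second (`r`) direction of a function on `ℝ × ℝ`. -/
noncomputable def pdr (f : ℝ × ℝ → ℝ) (p : ℝ × ℝ) : ℝ := fderiv ℝ f p (0, 1)

/-- If `ξ₁, ξ₂` are `C¹` and `x₁, x₂` are `C²` on an open subset `B` of the half-plane
`{r > 0}`, with `∂x₁/∂H = r·∂ξ₂/∂r`, `∂x₁/∂r = −r·∂ξ₂/∂H`, `∂x₂/∂H = −r·∂ξ₁/∂r`,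
`∂x₂/∂r = r·∂ξ₁/∂H` on `B`, then the 1-form `ξ₁ dx₁ + ξ₂ dx₂` is closed on `B`:
`∂/∂r (ξ₁·∂x₁/∂H + ξ₂·∂x₂/∂H) = ∂/∂H (ξ₁·∂x₁/∂r + ξ₂·∂x₂/∂r)` at every point of `B`. -/
theorem closedness_of_xi_dx
    (B : Set (ℝ × ℝ)) (hBopen : IsOpen B) (hBhalf : ∀ p ∈ B, 0 < p.2)
    (ξ₁ ξ₂ x₁ x₂ : ℝ × ℝ → ℝ)
    (hξ₁ : ContDiffOn ℝ 1 ξ₁ B) (hξ₂ : ContDiffOn ℝ 1 ξ₂ B)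
    (hx₁ : ContDiffOn ℝ 2 x₁ B) (hx₂ : ContDiffOn ℝ 2 x₂ B)
    (h1 : ∀ p ∈ B, pdH x₁ p = p.2 * pdr ξ₂ p)
    (h2 : ∀ p ∈ B, pdr x₁ p = -(p.2 * pdH ξ₂ p))
    (h3 : ∀ p ∈ B, pdH x₂ p = -(p.2 * pdr ξ₁ p))
    (h4 : ∀ p ∈ B, pdr x₂ p = p.2 * pdH ξ₁ p) :
    ∀ p ∈ B,
      pdr (fun q => ξ₁ q * pdH x₁ q + ξ₂ q * pdH x₂ q) p
        = pdH (fun q => ξ₁ q * pdr x₁ q + ξ₂ q * pdr x₂ q) p := by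
  intro p hp
  have hB : B ∈ nhds p := hBopen.mem_nhds hp
  have d1 : DifferentiableAt ℝ ξ₁ p := (hξ₁.contDiffAt hB).differentiableAt (by norm_num)
  have d2 : DifferentiableAt ℝ ξ₂ p := (hξ₂.contDiffAt hB).differentiableAt (by norm_num)
  have c1 := hx₁.contDiffAt hB
  have c2 := hx₂.contDiffAt hB
  have e1 : DifferentiableAt ℝ (fderiv ℝ x₁) p :=
    (c1.fderiv_right (m := 1) (by norm_num)).differentiableAt (by norm_num)
  have e2 : DifferentiableAt ℝ (fderiv ℝ x₂) p :=
    (c2.fderiv_right (m := 1) (by norm_num)).differentiableAt (by norm_num)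
  have s1 : IsSymmSndFDerivAt ℝ x₁ p := c1.isSymmSndFDerivAt (by simp)
  have s2 : IsSymmSndFDerivAt ℝ x₂ p := c2.isSymmSndFDerivAt (by simp)
  have key : ∀ v w : ℝ × ℝ,
      fderiv ℝ (fun q => ξ₁ q * fderiv ℝ x₁ q v + ξ₂ q * fderiv ℝ x₂ q v) p w
        = ξ₁ p * fderiv ℝ (fderiv ℝ x₁) p w v + fderiv ℝ x₁ p v * fderiv ℝ ξ₁ p w
          + (ξ₂ p * fderiv ℝ (fderiv ℝ x₂) p w v + fderiv ℝ x₂ p v * fderiv ℝ ξ₂ p w) := by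
    intro v w
    have a1 := d1.hasFDerivAt.mul (e1.hasFDerivAt.clm_apply (hasFDerivAt_const v p))
    have a2 := d2.hasFDerivAt.mul (e2.hasFDerivAt.clm_apply (hasFDerivAt_const v p))
    have h := (a1.add a2).fderiv
    have h' := congrArg (fun L => L w) h
    refine Eq.trans h' ?_
    simp
  have g1 := h1 p hp
  have g2 := h2 p hp
  have g3 := h3 p hp
  have g4 := h4 p hp
  unfold pdH pdr at *
  rw [key, key, s1.eq (0, 1) (1, 0), s2.eq (0, 1) (1, 0), g1, g2, g3, g4]
  ring
end

section
/- Let B be an open subset of the half-plane ℍ = {(H,r) ∈ ℝ² : r > 0}, let ξ₁, ξ₂ : B → ℝ be smooth functions each satisfying the axi-symmetric harmonic equation ∂²ξ/∂H² + ∂²ξ/∂r² + (1/r)·∂ξ/∂r = 0 on B, and suppose det Dξ := ∂ξ₁/∂H·∂ξ₂/∂r − ∂ξ₁/∂r·∂ξ₂/∂H > 0 on B. Let x = (x₁,x₂) : B → ℝ² be a smooth map satisfying ∂x₁/∂H = r·∂ξ₂/∂r, ∂x₁/∂r = −r·∂ξ₂/∂H, ∂x₂/∂H = −r·∂ξ₁/∂r,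 ∂x₂/∂r = r·∂ξ₁/∂H, and suppose x is injective with open image U. Let u : U → ℝ be a smooth function with ∂u/∂x₁ ∘ x = ξ₁ and ∂u/∂x₂ ∘ x = ξ₂ on B. Then: (1) the Hessian of u is positive definite at every point of U; and (2) u satisfies Abreu's equation ∑_{j,k=1}^{2} ∂²u^{jk}/∂x_j∂x_k = 0 on U, where (u^{jk}) denotes the inverse matrix of the Hessian of u. -/
open Matrix

/-- The two standard basis vectors of `ℝ × ℝ`. -/
noncomputable def e2 : Fin 2 → ℝ × ℝ := ![(1, 0), (0, 1)]

/-- The Hessian matrix of a function `u : ℝ × ℝ → ℝ` at a point. -/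
noncomputable def Hess (u : ℝ × ℝ → ℝ) (y : ℝ × ℝ) : Matrix (Fin 2) (Fin 2) ℝ :=
  Matrix.of fun i j => fderiv ℝ (fun z => fderiv ℝ u z (e2 i)) y (e2 j)

open Topology Filter

/-- A linear form on `ℝ × ℝ` in coordinates. -/
lemma clm_prod_apply (L : ℝ × ℝ →L[ℝ] ℝ) (v : ℝ × ℝ) :
    L v = L (1, 0) * v.1 + L (0, 1) * v.2 := by
  have : v = v.1 • ((1, 0) : ℝ × ℝ) + v.2 • ((0, 1) : ℝ × ℝ) := by ext <;> simp
  conv_lhs => rw [this]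
  rw [map_add, map_smul, map_smul]
  simp [mul_comm]

/-- Chain rule for `f (a q, b q)`. -/
lemma chain_pair {f a b : ℝ × ℝ → ℝ} {p : ℝ × ℝ}
    (hf : DifferentiableAt ℝ f (a p, b p)) (ha : DifferentiableAt ℝ a p)
    (hb : DifferentiableAt ℝ b p) (v : ℝ × ℝ) :
    fderiv ℝ (fun q => f (a q, b q)) p v
      = pdH f (a p, b p) * fderiv ℝ a p v + pdr f (a p, b p) * fderiv ℝ b p v := by
  have h := hf.hasFDerivAt.comp p (ha.hasFDerivAt.prodMk hb.hasFDerivAt)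
  have h' : HasFDerivAt (fun q => f (a q, b q)) _ p := h
  rw [h'.fderiv]
  simp only [ContinuousLinearMap.comp_apply, ContinuousLinearMap.prod_apply]
  rw [clm_prod_apply]
  rfl

lemma contDiffAt_pd {f : ℝ × ℝ → ℝ} {y : ℝ × ℝ} {m n : WithTop ℕ∞}
    (hf : ContDiffAt ℝ n f y) (hmn : m + 1 ≤ n) (v : ℝ × ℝ) :
    ContDiffAt ℝ m (fun z => fderiv ℝ f z v) y :=
  (hf.fderiv_right hmn).clm_apply contDiffAt_const

/-- Symmetry of second partial derivatives. -/
lemma pd_symm {f : ℝ × ℝ → ℝ} {y : ℝ × ℝ} (hf : ContDiffAt ℝ 2 f y) (v w : ℝ × ℝ) :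
    fderiv ℝ (fun z => fderiv ℝ f z v) y w = fderiv ℝ (fun z => fderiv ℝ f z w) y v := by
  have hd : DifferentiableAt ℝ (fderiv ℝ f) y :=
    (hf.fderiv_right (m := 1) (by norm_num)).differentiableAt (by norm_num)
  have hs := hf.isSymmSndFDerivAt (by simp)
  have key : ∀ a b : ℝ × ℝ, fderiv ℝ (fun z => fderiv ℝ f z a) y b
      = fderiv ℝ (fderiv ℝ f) y b a := by
    intro a b
    rw [fderiv_clm_apply hd (differentiableAt_const a)]
    simp
  rw [key, key]
  exact hs w v

/-- Smooth local inverse of a planar map with non-vanishing Jacobian. -/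
lemma local_inv {x₁ x₂ : ℝ × ℝ → ℝ} {p : ℝ × ℝ} (h₁ : ContDiffAt ℝ 2 x₁ p)
    (h₂ : ContDiffAt ℝ 2 x₂ p)
    (hdet : pdH x₁ p * pdr x₂ p - pdr x₁ p * pdH x₂ p ≠ 0) :
    ∃ g : ℝ × ℝ → ℝ × ℝ, ContDiffAt ℝ 2 g (x₁ p, x₂ p) ∧ g (x₁ p, x₂ p) = p ∧
      ∀ᶠ y in 𝓝 (x₁ p, x₂ p), (x₁ (g y), x₂ (g y)) = y := by
  have hF : ContDiffAt ℝ 2 (fun q => (x₁ q, x₂ q)) p := h₁.prodMk h₂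
  have hd₁ := (h₁.differentiableAt (by norm_num)).hasFDerivAt
  have hd₂ := (h₂.differentiableAt (by norm_num)).hasFDerivAt
  set L : ℝ × ℝ →L[ℝ] ℝ × ℝ := (fderiv ℝ x₁ p).prod (fderiv ℝ x₂ p) with hL
  have hFd : HasFDerivAt (fun q => (x₁ q, x₂ q)) L p := hd₁.prodMk hd₂
  have hinj : Function.Injective (L : ℝ × ℝ →ₗ[ℝ] ℝ × ℝ) := by
    rw [← LinearMap.ker_eq_bot, LinearMap.ker_eq_bot']
    intro v hv
    have hv' : (fderiv ℝ x₁ p v, fderiv ℝ x₂ p v) = ((0 : ℝ), (0 : ℝ)) := hv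
    have e1 : fderiv ℝ x₁ p v = 0 := congrArg Prod.fst hv'
    have e2 : fderiv ℝ x₂ p v = 0 := congrArg Prod.snd hv'
    rw [clm_prod_apply] at e1 e2
    change pdH x₁ p * v.1 + pdr x₁ p * v.2 = 0 at e1
    change pdH x₂ p * v.1 + pdr x₂ p * v.2 = 0 at e2
    ext
    · have : (pdH x₁ p * pdr x₂ p - pdr x₁ p * pdH x₂ p) * v.1 = 0 := by
        linear_combination pdr x₂ p * e1 - pdr x₁ p * e2
      simpa [hdet] using this
    · have : (pdH x₁ p * pdr x₂ p - pdr x₁ p * pdH x₂ p) * v.2 = 0 := by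
        linear_combination pdH x₁ p * e2 - pdH x₂ p * e1
      simpa [hdet] using this
  let E : (ℝ × ℝ) ≃L[ℝ] (ℝ × ℝ) :=
    (LinearEquiv.ofInjectiveEndo (L : ℝ × ℝ →ₗ[ℝ] ℝ × ℝ) hinj).toContinuousLinearEquiv
  have hE : HasFDerivAt (fun q => (x₁ q, x₂ q)) (E : ℝ × ℝ →L[ℝ] ℝ × ℝ) p := by
    have : (E : ℝ × ℝ →L[ℝ] ℝ × ℝ) = L := by
      ext v <;> rfl
    rw [this]; exact hFd
  refine ⟨hF.localInverse hE (by norm_num), hF.to_localInverse hE (by norm_num),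
    hF.localInverse_apply_image hE (by norm_num), ?_⟩
  exact (hF.hasStrictFDerivAt' hE (by norm_num)).eventually_right_inverse

/-- The purely algebraic step: solving for the Hessian. -/
lemma hess_alg {a b c d r h11 h12 h21 h22 : ℝ} (hr : 0 < r) (hD : 0 < a * d - b * c)
    (e1 : a = h11 * (r * d) + h12 * (-(r * b))) (e2 : b = h11 * (-(r * c)) + h12 * (r * a))
    (e3 : c = h21 * (r * d) + h22 * (-(r * b))) (e4 : d = h21 * (-(r * c)) + h22 * (r * a)) :
    h11 = (a ^ 2 + b ^ 2) / (r * (a * d - b * c)) ∧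
    h12 = (a * c + b * d) / (r * (a * d - b * c)) ∧
    h21 = (a * c + b * d) / (r * (a * d - b * c)) ∧
    h22 = (c ^ 2 + d ^ 2) / (r * (a * d - b * c)) := by
  have h : r * (a * d - b * c) ≠ 0 := by positivity
  refine ⟨?_, ?_, ?_, ?_⟩ <;> rw [eq_div_iff h]
  · linear_combination -a * e1 - b * e2
  · linear_combination -c * e1 - d * e2
  · linear_combination -a * e3 - b * e4
  · linear_combination -c * e3 - d * e4

/-- The purely algebraic step behind the divergence-free field. -/
lemma grad_alg {a b c d r H1 H2 R1 R2 : ℝ} (hr : 0 < r) (hD : 0 < a * d - b * c)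
    (e1 : r * d * H1 + -(r * c) * R1 = 1) (e2 : r * d * H2 + -(r * c) * R2 = 0)
    (e3 : -(r * b) * H1 + r * a * R1 = 0) (e4 : -(r * b) * H2 + r * a * R2 = 1) :
    H1 = a / (r * (a * d - b * c)) ∧ H2 = c / (r * (a * d - b * c)) ∧
    R1 = b / (r * (a * d - b * c)) ∧ R2 = d / (r * (a * d - b * c)) := by
  have h : r * (a * d - b * c) ≠ 0 := by positivity
  refine ⟨?_, ?_, ?_, ?_⟩ <;> rw [eq_div_iff h]
  · linear_combination a * e1 + c * e3
  · linear_combination a * e2 + c * e4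
  · linear_combination b * e1 + d * e3
  · linear_combination b * e2 + d * e4

lemma posDef_two {M : Matrix (Fin 2) (Fin 2) ℝ} (hs : M 0 1 = M 1 0) (h0 : 0 < M 0 0)
    (hd : 0 < M 0 0 * M 1 1 - M 0 1 ^ 2) : M.PosDef := by
  refine Matrix.PosDef.of_dotProduct_mulVec_pos ?_ ?_
  · ext i j
    fin_cases i <;> fin_cases j <;> simp [hs]
  · intro v hv
    have hne : v 0 ≠ 0 ∨ v 1 ≠ 0 := by
      by_contra hcon
      push Not at hcon
      apply hv
      ext i
      fin_cases i
      · exact hcon.1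
      · exact hcon.2
    simp only [Matrix.mulVec, dotProduct, Fin.sum_univ_two, Pi.star_apply, star_trivial]
    rw [← hs]
    have key : M 0 0 * (v 0 * (M 0 0 * v 0 + M 0 1 * v 1) + v 1 * (M 0 1 * v 0 + M 1 1 * v 1))
        = (M 0 0 * v 0 + M 0 1 * v 1) ^ 2 + (M 0 0 * M 1 1 - M 0 1 ^ 2) * v 1 ^ 2 := by ring
    refine pos_of_mul_pos_right (a := M 0 0) ?_ h0.le
    rw [key]
    by_cases hv1 : v 1 = 0
    · have h00 : v 0 ≠ 0 := by tauto
      rw [hv1]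
      have : 0 < (M 0 0 * v 0) ^ 2 := by positivity
      simpa using this
    · positivity

lemma two_le_smooth : (2 : WithTop ℕ∞) ≤ ((⊤ : ℕ∞) : WithTop ℕ∞) :=
  WithTop.coe_le_coe.2 (le_top : (2 : ℕ∞) ≤ ⊤)

/-- Donaldson's theorem (Joyce's construction in action-angle coordinates).
If `ξ₁, ξ₂` are smooth axi-symmetric harmonic functions on an open subset `B` of the
half-plane `{r > 0}` with `det Dξ > 0`, if `x = (x₁, x₂)` is a smooth map on `B`
satisfying `∂x₁/∂H = r·∂ξ₂/∂r`, `∂x₁/∂r = −r·∂ξ₂/∂H`, `∂x₂/∂H = −r·∂ξ₁/∂r`,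
`∂x₂/∂r = r·∂ξ₁/∂H`, injective with open image `U`, and if `u` is smooth on `U` with
`∂u/∂x₁ ∘ x = ξ₁` and `∂u/∂x₂ ∘ x = ξ₂`, then the Hessian of `u` is positive definite
on `U` and `u` satisfies Abreu's equation `∑_{j,k} ∂²u^{jk}/∂x_j∂x_k = 0` on `U`,
where `(u^{jk})` is the inverse matrix of the Hessian of `u`. -/
theorem donaldson_construction
    (B : Set (ℝ × ℝ)) (hBopen : IsOpen B) (hBhalf : ∀ p ∈ B, 0 < p.2)
    (ξ₁ ξ₂ x₁ x₂ : ℝ × ℝ → ℝ)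
    (hξ₁ : ContDiffOn ℝ (⊤ : ℕ∞) ξ₁ B) (hξ₂ : ContDiffOn ℝ (⊤ : ℕ∞) ξ₂ B)
    (hharm₁ : ∀ p ∈ B, pdH (pdH ξ₁) p + pdr (pdr ξ₁) p + (1 / p.2) * pdr ξ₁ p = 0)
    (hharm₂ : ∀ p ∈ B, pdH (pdH ξ₂) p + pdr (pdr ξ₂) p + (1 / p.2) * pdr ξ₂ p = 0)
    (hdet : ∀ p ∈ B, 0 < pdH ξ₁ p * pdr ξ₂ p - pdr ξ₁ p * pdH ξ₂ p)
    (hx₁ : ContDiffOn ℝ (⊤ : ℕ∞) x₁ B) (hx₂ : ContDiffOn ℝ (⊤ : ℕ∞) x₂ B)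
    (h1 : ∀ p ∈ B, pdH x₁ p = p.2 * pdr ξ₂ p)
    (h2 : ∀ p ∈ B, pdr x₁ p = -(p.2 * pdH ξ₂ p))
    (h3 : ∀ p ∈ B, pdH x₂ p = -(p.2 * pdr ξ₁ p))
    (h4 : ∀ p ∈ B, pdr x₂ p = p.2 * pdH ξ₁ p)
    (hinj : Set.InjOn (fun p => (x₁ p, x₂ p)) B)
    (U : Set (ℝ × ℝ)) (hUimage : U = (fun p => (x₁ p, x₂ p)) '' B) (hUopen : IsOpen U)
    (u : ℝ × ℝ → ℝ) (hu : ContDiffOn ℝ (⊤ : ℕ∞) u U)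
    (hgrad₁ : ∀ p ∈ B, pdH u (x₁ p, x₂ p) = ξ₁ p)
    (hgrad₂ : ∀ p ∈ B, pdr u (x₁ p, x₂ p) = ξ₂ p) :
    (∀ x ∈ U, (Hess u x).PosDef) ∧
    (∀ x ∈ U, ∑ j : Fin 2, ∑ k : Fin 2,
        fderiv ℝ (fun y => fderiv ℝ (fun z => ((Hess u z)⁻¹) j k) y (e2 j)) x (e2 k)
          = 0) := by
  have hB : ∀ p ∈ B, B ∈ 𝓝 p := fun p hp => hBopen.mem_nhds hp
  have hU : ∀ y ∈ U, U ∈ 𝓝 y := fun y hy => hUopen.mem_nhds hy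
  have hXU : ∀ p ∈ B, (x₁ p, x₂ p) ∈ U := fun p hp => by
    rw [hUimage]; exact ⟨p, hp, rfl⟩
  have huat : ∀ y ∈ U, ContDiffAt ℝ (⊤ : ℕ∞) u y := fun y hy => hu.contDiffAt (hU y hy)
  have hpd : ∀ v : ℝ × ℝ, ∀ y ∈ U, ContDiffAt ℝ (⊤ : ℕ∞) (fun z => fderiv ℝ u z v) y :=
    fun v y hy => contDiffAt_pd (huat y hy) (by norm_num) v
  have hpd2 : ∀ v w : ℝ × ℝ, ∀ y ∈ U,
      ContDiffAt ℝ (⊤ : ℕ∞) (fun z => fderiv ℝ (fun z' => fderiv ℝ u z' v) z w) y :=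
    fun v w y hy => contDiffAt_pd (hpd v y hy) (by norm_num) w
  have hx₁d : ∀ p ∈ B, DifferentiableAt ℝ x₁ p := fun p hp =>
    (hx₁.contDiffAt (hB p hp)).differentiableAt (by simp)
  have hx₂d : ∀ p ∈ B, DifferentiableAt ℝ x₂ p := fun p hp =>
    (hx₂.contDiffAt (hB p hp)).differentiableAt (by simp)
  -- differentiate `∂u ∘ x = ξ`
  have hch : ∀ (w : ℝ × ℝ) (ξ : ℝ × ℝ → ℝ),
      (∀ p ∈ B, fderiv ℝ u (x₁ p, x₂ p) w = ξ p) → ∀ p ∈ B, ∀ v : ℝ × ℝ,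
      fderiv ℝ ξ p v = fderiv ℝ (fun z => fderiv ℝ u z w) (x₁ p, x₂ p) (1, 0) * fderiv ℝ x₁ p v
        + fderiv ℝ (fun z => fderiv ℝ u z w) (x₁ p, x₂ p) (0, 1) * fderiv ℝ x₂ p v := by
    intro w ξ hw p hp v
    have hev : ξ =ᶠ[𝓝 p] fun q => (fun z => fderiv ℝ u z w) (x₁ q, x₂ q) := by
      filter_upwards [hB p hp] with q hq
      exact (hw q hq).symm
    rw [hev.fderiv_eq]
    exact chain_pair ((hpd w _ (hXU p hp)).differentiableAt (by simp)) (hx₁d p hp) (hx₂d p hp) v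
  have hHess : ∀ p ∈ B,
      Hess u (x₁ p, x₂ p) 0 0 = (pdH ξ₁ p ^ 2 + pdr ξ₁ p ^ 2)
        / (p.2 * (pdH ξ₁ p * pdr ξ₂ p - pdr ξ₁ p * pdH ξ₂ p)) ∧
      Hess u (x₁ p, x₂ p) 0 1 = (pdH ξ₁ p * pdH ξ₂ p + pdr ξ₁ p * pdr ξ₂ p)
        / (p.2 * (pdH ξ₁ p * pdr ξ₂ p - pdr ξ₁ p * pdH ξ₂ p)) ∧
      Hess u (x₁ p, x₂ p) 1 0 = (pdH ξ₁ p * pdH ξ₂ p + pdr ξ₁ p * pdr ξ₂ p)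
        / (p.2 * (pdH ξ₁ p * pdr ξ₂ p - pdr ξ₁ p * pdH ξ₂ p)) ∧
      Hess u (x₁ p, x₂ p) 1 1 = (pdH ξ₂ p ^ 2 + pdr ξ₂ p ^ 2)
        / (p.2 * (pdH ξ₁ p * pdr ξ₂ p - pdr ξ₁ p * pdH ξ₂ p)) := by
    intro p hp
    refine hess_alg (hBhalf p hp) (hdet p hp) ?_ ?_ ?_ ?_
    · rw [← h1 p hp, ← h3 p hp]; exact hch (1, 0) ξ₁ hgrad₁ p hp (1, 0)
    · rw [← h2 p hp, ← h4 p hp]; exact hch (1, 0) ξ₁ hgrad₁ p hp (0, 1)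
    · rw [← h1 p hp, ← h3 p hp]; exact hch (0, 1) ξ₂ hgrad₂ p hp (1, 0)
    · rw [← h2 p hp, ← h4 p hp]; exact hch (0, 1) ξ₂ hgrad₂ p hp (0, 1)
  have hdetH : ∀ p ∈ B, Hess u (x₁ p, x₂ p) 0 0 * Hess u (x₁ p, x₂ p) 1 1
      - Hess u (x₁ p, x₂ p) 0 1 ^ 2 = 1 / p.2 ^ 2 := by
    intro p hp
    obtain ⟨e1, e2, -, e4⟩ := hHess p hp
    have hr := hBhalf p hp
    have hD := hdet p hp
    rw [e1, e2, e4]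
    set a := pdH ξ₁ p
    set b := pdr ξ₁ p
    set c := pdH ξ₂ p
    set d := pdr ξ₂ p
    have hDne := hD.ne'
    have hrne := hr.ne'
    generalize hDD : a * d - b * c = D at *
    field_simp
    rw [← hDD]; ring
  constructor
  · intro y hy
    rw [hUimage] at hy
    obtain ⟨p, hp, rfl⟩ := hy
    obtain ⟨e1, e2, e3, -⟩ := hHess p hp
    have hr := hBhalf p hp
    have hD := hdet p hp
    refine posDef_two (e2.trans e3.symm) ?_ ?_
    · change 0 < Hess u (x₁ p, x₂ p) 0 0
      rw [e1]
      refine div_pos ?_ (by positivity)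
      by_contra hcon
      have ha : pdH ξ₁ p = 0 := by nlinarith [sq_nonneg (pdH ξ₁ p), sq_nonneg (pdr ξ₁ p)]
      have hb : pdr ξ₁ p = 0 := by nlinarith [sq_nonneg (pdH ξ₁ p), sq_nonneg (pdr ξ₁ p)]
      rw [ha, hb] at hD
      simp at hD
    · change 0 < Hess u (x₁ p, x₂ p) 0 0 * Hess u (x₁ p, x₂ p) 1 1
        - Hess u (x₁ p, x₂ p) 0 1 ^ 2
      rw [hdetH p hp]
      positivity
  · intro y₀ hy₀
    have hy₀' := hy₀
    rw [hUimage] at hy₀'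
    obtain ⟨p₀, hp₀, hpy⟩ := hy₀'
    have hpy' : (x₁ p₀, x₂ p₀) = y₀ := hpy
    obtain ⟨g, hg, hgp, hgr⟩ := local_inv (x₁ := x₁) (x₂ := x₂) (p := p₀)
      ((hx₁.contDiffAt (hB p₀ hp₀)).of_le two_le_smooth)
      ((hx₂.contDiffAt (hB p₀ hp₀)).of_le two_le_smooth) (by
        rw [h1 p₀ hp₀, h2 p₀ hp₀, h3 p₀ hp₀, h4 p₀ hp₀]
        have hr := hBhalf p₀ hp₀
        have hD := hdet p₀ hp₀
        have : 0 < p₀.2 ^ 2 * (pdH ξ₁ p₀ * pdr ξ₂ p₀ - pdr ξ₁ p₀ * pdH ξ₂ p₀) := by positivity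
        intro h
        apply this.ne'
        rw [← h]; ring)
    rw [hpy'] at hg hgp hgr
    have hgB : ∀ᶠ y in 𝓝 y₀, g y ∈ B := by
      apply hg.continuousAt
      rw [hgp]; exact hB p₀ hp₀
    obtain ⟨W, hW, hWo, hyW⟩ := eventually_nhds_iff.1
      (((hg.eventually (by simp)).and (hgr.and hgB)).and (hU y₀ hy₀))
    have hWn : ∀ y ∈ W, W ∈ 𝓝 y := fun y hy => hWo.mem_nhds hy
    have hWU : ∀ y ∈ W, y ∈ U := fun y hy => (hW y hy).2
    have hWB : ∀ y ∈ W, g y ∈ B := fun y hy => (hW y hy).1.2.2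
    have hWX : ∀ y ∈ W, (x₁ (g y), x₂ (g y)) = y := fun y hy => (hW y hy).1.2.1
    have hWg : ∀ y ∈ W, ContDiffAt ℝ 2 g y := fun y hy => (hW y hy).1.1
    obtain ⟨h, hh⟩ : ∃ h : ℝ × ℝ → ℝ, h = fun y => (g y).1 := ⟨_, rfl⟩
    obtain ⟨r, hrr⟩ : ∃ r : ℝ × ℝ → ℝ, r = fun y => (g y).2 := ⟨_, rfl⟩
    have hhs : ∀ y ∈ W, ContDiffAt ℝ 2 h y := fun y hy => by
      rw [hh]; exact (hWg y hy).fst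
    have hrs : ∀ y ∈ W, ContDiffAt ℝ 2 r y := fun y hy => by
      rw [hrr]; exact (hWg y hy).snd
    have hhd : ∀ y ∈ W, DifferentiableAt ℝ h y := fun y hy =>
      (hhs y hy).differentiableAt (by norm_num)
    have hrd : ∀ y ∈ W, DifferentiableAt ℝ r y := fun y hy =>
      (hrs y hy).differentiableAt (by norm_num)
    have hgeq : ∀ y, (h y, r y) = g y := fun y => by rw [hh, hrr]
    -- gradients of `h` and `r`
    have hgr : ∀ y ∈ W,
        pdH h y = pdH ξ₁ (g y) / (r y * (pdH ξ₁ (g y) * pdr ξ₂ (g y)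
          - pdr ξ₁ (g y) * pdH ξ₂ (g y))) ∧
        pdr h y = pdH ξ₂ (g y) / (r y * (pdH ξ₁ (g y) * pdr ξ₂ (g y)
          - pdr ξ₁ (g y) * pdH ξ₂ (g y))) ∧
        pdH r y = pdr ξ₁ (g y) / (r y * (pdH ξ₁ (g y) * pdr ξ₂ (g y)
          - pdr ξ₁ (g y) * pdH ξ₂ (g y))) ∧
        pdr r y = pdr ξ₂ (g y) / (r y * (pdH ξ₁ (g y) * pdr ξ₂ (g y)
          - pdr ξ₁ (g y) * pdH ξ₂ (g y))) := by
      intro y hy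
      have hp := hWB y hy
      have hry : r y = (g y).2 := by rw [hrr]
      have c1 : ∀ v : ℝ × ℝ, pdH x₁ (g y) * fderiv ℝ h y v + pdr x₁ (g y) * fderiv ℝ r y v
          = v.1 := by
        intro v
        have hc := chain_pair (f := x₁) (a := h) (b := r) (p := y)
          (by rw [hgeq]; exact hx₁d _ hp) (hhd y hy) (hrd y hy) v
        rw [hgeq] at hc
        rw [← hc]
        have hev : (fun q => x₁ (h q, r q)) =ᶠ[𝓝 y] Prod.fst := by
          filter_upwards [hWn y hy] with q hq
          rw [hgeq]; exact congrArg Prod.fst (hWX q hq)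
        rw [hev.fderiv_eq, fderiv_fst]; rfl
      have c2 : ∀ v : ℝ × ℝ, pdH x₂ (g y) * fderiv ℝ h y v + pdr x₂ (g y) * fderiv ℝ r y v
          = v.2 := by
        intro v
        have hc := chain_pair (f := x₂) (a := h) (b := r) (p := y)
          (by rw [hgeq]; exact hx₂d _ hp) (hhd y hy) (hrd y hy) v
        rw [hgeq] at hc
        rw [← hc]
        have hev : (fun q => x₂ (h q, r q)) =ᶠ[𝓝 y] Prod.snd := by
          filter_upwards [hWn y hy] with q hq
          rw [hgeq]; exact congrArg Prod.snd (hWX q hq)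
        rw [hev.fderiv_eq, fderiv_snd]; rfl
      rw [h1 _ hp, h2 _ hp] at c1
      rw [h3 _ hp, h4 _ hp] at c2
      rw [hry]
      exact grad_alg (hBhalf _ hp) (hdet _ hp) (c1 (1, 0)) (c1 (0, 1)) (c2 (1, 0)) (c2 (0, 1))
    have hrpos : ∀ y ∈ W, 0 < r y := fun y hy => by
      rw [hrr]; exact hBhalf _ (hWB y hy)
    obtain ⟨A, hA⟩ : ∃ A : ℝ × ℝ → ℝ, A = fun y => Hess u y 0 0 := ⟨_, rfl⟩
    obtain ⟨F, hF⟩ : ∃ F : ℝ × ℝ → ℝ, F = fun y => Hess u y 0 1 := ⟨_, rfl⟩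
    obtain ⟨C, hC⟩ : ∃ C : ℝ × ℝ → ℝ, C = fun y => Hess u y 1 1 := ⟨_, rfl⟩
    have hAs : ∀ y ∈ W, ContDiffAt ℝ 2 A y := fun y hy => by
      rw [hA]; exact (hpd2 (1, 0) (1, 0) y (hWU y hy)).of_le two_le_smooth
    have hFs : ∀ y ∈ W, ContDiffAt ℝ 2 F y := fun y hy => by
      rw [hF]; exact (hpd2 (1, 0) (0, 1) y (hWU y hy)).of_le two_le_smooth
    have hCs : ∀ y ∈ W, ContDiffAt ℝ 2 C y := fun y hy => by
      rw [hC]; exact (hpd2 (0, 1) (0, 1) y (hWU y hy)).of_le two_le_smooth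
    have hsym : ∀ y ∈ W, Hess u y 1 0 = F y := fun y hy => by
      rw [hF]
      exact pd_symm ((huat y (hWU y hy)).of_le two_le_smooth) (0, 1) (1, 0)
    -- third derivatives
    have t1 : ∀ y ∈ W, pdr A y = pdH F y := fun y hy => by
      rw [hA, hF]
      exact pd_symm ((hpd (1, 0) y (hWU y hy)).of_le two_le_smooth) (1, 0) (0, 1)
    have t2 : ∀ y ∈ W, pdH C y = pdr F y := fun y hy => by
      have hev : F =ᶠ[𝓝 y] fun z => Hess u z 1 0 := by
        filter_upwards [hWn y hy] with q hq
        exact (hsym q hq).symm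
      unfold pdr
      rw [hev.fderiv_eq, hC]
      exact pd_symm ((hpd (0, 1) y (hWU y hy)).of_le two_le_smooth) (0, 1) (1, 0)
    -- the inverse Hessian
    have hdW : ∀ y ∈ W, A y * C y - F y ^ 2 = 1 / r y ^ 2 := fun y hy => by
      have := hdetH _ (hWB y hy)
      rw [hWX y hy] at this
      rw [hA, hC, hF, hrr]; exact this
    have hinv : ∀ y ∈ W, (Hess u y)⁻¹ = !![r y ^ 2 * C y, -(r y ^ 2 * F y);
        -(r y ^ 2 * F y), r y ^ 2 * A y] := by
      intro y hy
      apply Matrix.inv_eq_left_inv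
      have hd := hdW y hy
      have hr := (hrpos y hy).ne'
      have hd' : r y ^ 2 * (A y * C y - F y ^ 2) = 1 := by rw [hd]; field_simp
      have hM : Hess u y = !![A y, F y; F y, C y] := by
        ext i j
        fin_cases i <;> fin_cases j
        · simp [hA]
        · simp [hF]
        · simpa using hsym y hy
        · simp [hC]
      rw [hM]
      ext i j
      fin_cases i <;> fin_cases j <;> simp [Matrix.mul_apply, Fin.sum_univ_two] <;>
        first | (linear_combination hd') | ring
    have hG : ∀ j k : Fin 2, ∀ y ∈ W, (fun z => ((Hess u z)⁻¹) j k) =ᶠ[𝓝 y]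
        fun y => (!![r y ^ 2 * C y, -(r y ^ 2 * F y);
        -(r y ^ 2 * F y), r y ^ 2 * A y] : Matrix (Fin 2) (Fin 2) ℝ) j k := by
      intro j k y hy
      filter_upwards [hWn y hy] with q hq
      rw [hinv q hq]
    -- derivatives of products
    have hprod : ∀ (f : ℝ × ℝ → ℝ), (∀ y ∈ W, ContDiffAt ℝ 2 f y) → ∀ y ∈ W, ∀ v : ℝ × ℝ,
        fderiv ℝ (fun z => r z ^ 2 * f z) y v
          = 2 * r y * fderiv ℝ r y v * f y + r y ^ 2 * fderiv ℝ f y v := by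
      intro f hf y hy v
      have := (((hrd y hy).hasFDerivAt.pow 2).mul
        ((hf y hy).differentiableAt (by norm_num)).hasFDerivAt)
      have h' : HasFDerivAt (fun z => r z ^ 2 * f z) _ y := this
      rw [h'.fderiv]
      simp
      ring
    have hGs : ∀ j k : Fin 2, ∀ y ∈ W, ContDiffAt ℝ 2 (fun z => ((Hess u z)⁻¹) j k) y := by
      intro j k y hy
      refine ContDiffAt.congr_of_eventuallyEq ?_ (hG j k y hy)
      have q1 := ((hrs y hy).pow 2).mul (hCs y hy)
      have q2 := (((hrs y hy).pow 2).mul (hFs y hy)).neg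
      have q3 := ((hrs y hy).pow 2).mul (hAs y hy)
      fin_cases j <;> fin_cases k
      · exact q1
      · exact q2
      · exact q2
      · exact q3
    have hGd : ∀ j k : Fin 2, ∀ v : ℝ × ℝ,
        DifferentiableAt ℝ (fun y => fderiv ℝ (fun z => ((Hess u z)⁻¹) j k) y v) y₀ :=
      fun j k v => (contDiffAt_pd (m := 1) (hGs j k y₀ hyW) (by norm_num) v).differentiableAt
        (by norm_num)
    have hneg : ∀ (f : ℝ × ℝ → ℝ) (y v : ℝ × ℝ),
        fderiv ℝ (fun z => -(f z)) y v = - fderiv ℝ f y v := by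
      intro f y v
      rw [fderiv_fun_neg]; rfl
    -- the two components of the divergence of the inverse Hessian
    have V1 : ∀ y ∈ W, fderiv ℝ (fun z => ((Hess u z)⁻¹) 0 0) y (1, 0)
        + fderiv ℝ (fun z => ((Hess u z)⁻¹) 1 0) y (0, 1) = -2 * pdr h y := by
      intro y hy
      rw [(hG 0 0 y hy).fderiv_eq, (hG 1 0 y hy).fderiv_eq]
      change fderiv ℝ (fun z => r z ^ 2 * C z) y (1, 0)
        + fderiv ℝ (fun z => -(r z ^ 2 * F z)) y (0, 1) = _
      rw [hneg, hprod C hCs y hy, hprod F hFs y hy]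
      change 2 * r y * pdH r y * C y + r y ^ 2 * pdH C y
        + -(2 * r y * pdr r y * F y + r y ^ 2 * pdr F y) = _
      rw [t2 y hy]
      obtain ⟨g1, g2, g3, g4⟩ := hgr y hy
      obtain ⟨e1, e2, e3, e4⟩ := hHess _ (hWB y hy)
      have hr := hrpos y hy
      have hD := hdet _ (hWB y hy)
      have hry : (g y).2 = r y := by rw [hrr]
      rw [hWX y hy, hry] at e1 e2 e3 e4
      have eC : C y = _ := (congrFun hC y).trans e4
      have eF : F y = _ := (congrFun hF y).trans e2
      rw [g2, g3, g4, eC, eF]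
      generalize pdH ξ₁ (g y) = a at *
      generalize pdr ξ₁ (g y) = b at *
      generalize pdH ξ₂ (g y) = c at *
      generalize pdr ξ₂ (g y) = d at *
      generalize hDD : a * d - b * c = D at *
      have hDne := hD.ne'
      have hrne := hr.ne'
      field_simp
      rw [← hDD]; ring
    have V2 : ∀ y ∈ W, fderiv ℝ (fun z => ((Hess u z)⁻¹) 0 1) y (1, 0)
        + fderiv ℝ (fun z => ((Hess u z)⁻¹) 1 1) y (0, 1) = 2 * pdH h y := by
      intro y hy
      rw [(hG 0 1 y hy).fderiv_eq, (hG 1 1 y hy).fderiv_eq]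
      change fderiv ℝ (fun z => -(r z ^ 2 * F z)) y (1, 0)
        + fderiv ℝ (fun z => r z ^ 2 * A z) y (0, 1) = _
      rw [hneg, hprod A hAs y hy, hprod F hFs y hy]
      change -(2 * r y * pdH r y * F y + r y ^ 2 * pdH F y)
        + (2 * r y * pdr r y * A y + r y ^ 2 * pdr A y) = _
      rw [t1 y hy]
      obtain ⟨g1, g2, g3, g4⟩ := hgr y hy
      obtain ⟨e1, e2, e3, e4⟩ := hHess _ (hWB y hy)
      have hr := hrpos y hy
      have hD := hdet _ (hWB y hy)
      have hry : (g y).2 = r y := by rw [hrr]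
      rw [hWX y hy, hry] at e1 e2 e3 e4
      have eA : A y = _ := (congrFun hA y).trans e1
      have eF : F y = _ := (congrFun hF y).trans e2
      rw [g1, g3, g4, eA, eF]
      generalize pdH ξ₁ (g y) = a at *
      generalize pdr ξ₁ (g y) = b at *
      generalize pdH ξ₂ (g y) = c at *
      generalize pdr ξ₂ (g y) = d at *
      generalize hDD : a * d - b * c = D at *
      have hDne := hD.ne'
      have hrne := hr.ne'
      field_simp
      rw [← hDD]; ring
    have hhp : ∀ v : ℝ × ℝ, DifferentiableAt ℝ (fun z => fderiv ℝ h z v) y₀ := fun v =>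
      (contDiffAt_pd (m := 1) (hhs y₀ hyW) (by norm_num) v).differentiableAt (by norm_num)
    have D1 : fderiv ℝ (fun y => fderiv ℝ (fun z => ((Hess u z)⁻¹) 0 0) y (1, 0)) y₀ (1, 0)
        + fderiv ℝ (fun y => fderiv ℝ (fun z => ((Hess u z)⁻¹) 1 0) y (0, 1)) y₀ (1, 0)
        = -2 * fderiv ℝ (fun z => fderiv ℝ h z (0, 1)) y₀ (1, 0) := by
      rw [← _root_.add_apply, ← fderiv_fun_add (hGd 0 0 _) (hGd 1 0 _)]
      have hev : (fun y => fderiv ℝ (fun z => ((Hess u z)⁻¹) 0 0) y (1, 0)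
          + fderiv ℝ (fun z => ((Hess u z)⁻¹) 1 0) y (0, 1)) =ᶠ[𝓝 y₀]
          fun y => -2 * fderiv ℝ h y (0, 1) := by
        filter_upwards [hWn y₀ hyW] with q hq
        exact V1 q hq
      rw [hev.fderiv_eq, fderiv_const_mul (hhp _)]
      rfl
    have D2 : fderiv ℝ (fun y => fderiv ℝ (fun z => ((Hess u z)⁻¹) 0 1) y (1, 0)) y₀ (0, 1)
        + fderiv ℝ (fun y => fderiv ℝ (fun z => ((Hess u z)⁻¹) 1 1) y (0, 1)) y₀ (0, 1)
        = 2 * fderiv ℝ (fun z => fderiv ℝ h z (1, 0)) y₀ (0, 1) := by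
      rw [← _root_.add_apply, ← fderiv_fun_add (hGd 0 1 _) (hGd 1 1 _)]
      have hev : (fun y => fderiv ℝ (fun z => ((Hess u z)⁻¹) 0 1) y (1, 0)
          + fderiv ℝ (fun z => ((Hess u z)⁻¹) 1 1) y (0, 1)) =ᶠ[𝓝 y₀]
          fun y => 2 * fderiv ℝ h y (1, 0) := by
        filter_upwards [hWn y₀ hyW] with q hq
        exact V2 q hq
      rw [hev.fderiv_eq, fderiv_const_mul (hhp _)]
      rfl
    have hS := pd_symm (hhs y₀ hyW) (1, 0) (0, 1)
    have E0 : e2 0 = (1, 0) := rfl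
    have E1 : e2 1 = (0, 1) := rfl
    simp only [Fin.sum_univ_two, E0, E1]
    linear_combination D1 + D2 + 2 * hS
end

section
/- Let u be a smooth function on an open set U ⊆ ℝ² whose Hessian matrix is positive definite at every point, and suppose u satisfies Abreu's equation ∑_{j,k=1}^{2} ∂²u^{jk}/∂x_j∂x_k = 0 on U, where (u^{jk}) denotes the inverse matrix of the Hessian of u. Let r := (det Hess u)^{−1/2}. Then ∑_{i,j=1}^{2} ∂/∂x_i ( u^{ij} · (∂r/∂x_j) / r ) = 0 at every point of U. Equivalently, the 1-form (−u^{2j}(∂r/∂x_j)/r) dx₁ + (u^{1j}(∂r/∂x_j)/r) dx₂ (summation over j) is closed, so that the harmonic conjugate coordinate H is locally well defined. -/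
open Matrix

lemma smooth_dir {U : Set (ℝ × ℝ)} (hU : IsOpen U) {f : ℝ × ℝ → ℝ}
    (hf : ContDiffOn ℝ (⊤ : ℕ∞) f U) (v : ℝ × ℝ) :
    ContDiffOn ℝ (⊤ : ℕ∞) (fun z => fderiv ℝ f z v) U :=
  (hf.fderiv_of_isOpen (m := (⊤ : ℕ∞)) hU (by simp)).clm_apply contDiffOn_const

lemma diff_at {U : Set (ℝ × ℝ)} (hU : IsOpen U) {f : ℝ × ℝ → ℝ}
    (hf : ContDiffOn ℝ (⊤ : ℕ∞) f U) {x : ℝ × ℝ} (hx : x ∈ U) : DifferentiableAt ℝ f x :=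
  (hf.contDiffAt (hU.mem_nhds hx)).differentiableAt (by simp)

lemma symm_dir {U : Set (ℝ × ℝ)} (hU : IsOpen U) {f : ℝ × ℝ → ℝ}
    (hf : ContDiffOn ℝ (⊤ : ℕ∞) f U) (v w : ℝ × ℝ) {x : ℝ × ℝ} (hx : x ∈ U) :
    fderiv ℝ (fun z => fderiv ℝ f z v) x w = fderiv ℝ (fun z => fderiv ℝ f z w) x v := by
  have h1 : DifferentiableAt ℝ (fderiv ℝ f) x :=
    ((hf.fderiv_of_isOpen (m := (⊤ : ℕ∞)) hU (by simp)).contDiffAt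
      (hU.mem_nhds hx)).differentiableAt (by simp)
  have h2 : IsSymmSndFDerivAt ℝ f x :=
    (hf.contDiffAt (hU.mem_nhds hx)).isSymmSndFDerivAt (by
      simp only [minSmoothness_of_isRCLikeNormedField]; exact WithTop.coe_le_coe.2 (le_top : (2 : ℕ∞) ≤ ⊤))
  rw [fderiv_clm_apply h1 (differentiableAt_const v), fderiv_clm_apply h1 (differentiableAt_const w)]
  simpa using h2.eq w v

lemma smooth_hess {U : Set (ℝ × ℝ)} (hU : IsOpen U) {u : ℝ × ℝ → ℝ}
    (hu : ContDiffOn ℝ (⊤ : ℕ∞) u U) (i j : Fin 2) :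
    ContDiffOn ℝ (⊤ : ℕ∞) (fun z => Hess u z i j) U :=
  smooth_dir hU (smooth_dir hU hu (e2 i)) (e2 j)

lemma hess_symm {U : Set (ℝ × ℝ)} (hU : IsOpen U) {u : ℝ × ℝ → ℝ}
    (hu : ContDiffOn ℝ (⊤ : ℕ∞) u U) {x : ℝ × ℝ} (hx : x ∈ U) (i j : Fin 2) :
    Hess u x i j = Hess u x j i :=
  symm_dir hU hu _ _ hx

lemma third_symm {U : Set (ℝ × ℝ)} (hU : IsOpen U) {u : ℝ × ℝ → ℝ}
    (hu : ContDiffOn ℝ (⊤ : ℕ∞) u U) {x : ℝ × ℝ} (hx : x ∈ U) (i j k : Fin 2) :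
    fderiv ℝ (fun z => Hess u z i j) x (e2 k) = fderiv ℝ (fun z => Hess u z i k) x (e2 j) :=
  symm_dir hU (smooth_dir hU hu (e2 i)) _ _ hx

lemma inv_entry (A : Matrix (Fin 2) (Fin 2) ℝ) :
    A⁻¹ = !![A 1 1 / A.det, -A 0 1 / A.det; -A 1 0 / A.det, A 0 0 / A.det] := by
  rw [Matrix.inv_def, Matrix.adjugate_fin_two]
  ext i j
  fin_cases i <;> fin_cases j <;> simp [div_eq_inv_mul]

lemma smooth_det {U : Set (ℝ × ℝ)} (hU : IsOpen U) {u : ℝ × ℝ → ℝ}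
    (hu : ContDiffOn ℝ (⊤ : ℕ∞) u U) :
    ContDiffOn ℝ (⊤ : ℕ∞) (fun z => (Hess u z).det) U := by
  simp only [Matrix.det_fin_two]
  exact ((smooth_hess hU hu 0 0).mul (smooth_hess hU hu 1 1)).sub
    ((smooth_hess hU hu 0 1).mul (smooth_hess hU hu 1 0))

lemma smooth_inv {U : Set (ℝ × ℝ)} (hU : IsOpen U) {u : ℝ × ℝ → ℝ}
    (hu : ContDiffOn ℝ (⊤ : ℕ∞) u U) (hpos : ∀ x ∈ U, (Hess u x).PosDef) (i j : Fin 2) :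
    ContDiffOn ℝ (⊤ : ℕ∞) (fun z => (Hess u z)⁻¹ i j) U := by
  have hD := smooth_det hU hu
  have h0 : ∀ x ∈ U, (Hess u x).det ≠ 0 := fun x hx => (hpos x hx).det_pos.ne'
  simp only [inv_entry]
  fin_cases i <;> fin_cases j
  · exact (smooth_hess hU hu 1 1).div hD h0
  · exact (smooth_hess hU hu 0 1).neg.div hD h0
  · exact (smooth_hess hU hu 1 0).neg.div hD h0
  · exact (smooth_hess hU hu 0 0).div hD h0

lemma fderiv_quot {f D : ℝ × ℝ → ℝ} {x : ℝ × ℝ} (hf : DifferentiableAt ℝ f x)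
    (hD : DifferentiableAt ℝ D x) (h0 : D x ≠ 0) (v : ℝ × ℝ) :
    fderiv ℝ (fun z => f z / D z) x v
      = (fderiv ℝ f x v * D x - f x * fderiv ℝ D x v) / (D x) ^ 2 := by
  have hm : DifferentiableAt ℝ (fun z => f z / D z) x := by
    simp only [div_eq_mul_inv]
    exact hf.mul (hD.inv h0)
  have he : (fun z => (f z / D z) * D z) =ᶠ[nhds x] f := by
    filter_upwards [hD.continuousAt.eventually_ne h0] with z hz using div_mul_cancel₀ _ hz
  have h := congrArg (fun L => L v) (he.fderiv_eq (𝕜 := ℝ))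
  simp only [fderiv_fun_mul hm hD, _root_.add_apply, _root_.smul_apply, smul_eq_mul] at h
  rw [← h]
  field_simp
  ring

lemma log_part {D : ℝ × ℝ → ℝ} {x : ℝ × ℝ} 
    (hD : DifferentiableAt ℝ D x) (h0 : 0 < D x) (v : ℝ × ℝ) (m : ℝ) :
    m * fderiv ℝ (fun z => D z ^ (-(1 : ℝ) / 2)) x v / D x ^ (-(1 : ℝ) / 2)
      = -(1/2) * m * fderiv ℝ D x v / D x := by
  rw [(hD.hasFDerivAt.rpow_const (p := -(1 : ℝ) / 2) (Or.inl h0.ne')).fderiv]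
  have hp := Real.rpow_pos_of_pos h0 (-(1 : ℝ) / 2)
  rw [Real.rpow_sub_one h0.ne']
  simp
  field_simp

lemma key {U : Set (ℝ × ℝ)} (hU : IsOpen U) {u : ℝ × ℝ → ℝ}
    (hu : ContDiffOn ℝ (⊤ : ℕ∞) u U) (hpos : ∀ x ∈ U, (Hess u x).PosDef)
    {y : ℝ × ℝ} (hy : y ∈ U) (i : Fin 2) :
    (∑ j : Fin 2, ((Hess u y)⁻¹ i j) *
        (fderiv ℝ (fun z => ((Hess u z).det) ^ (-(1 : ℝ) / 2)) y (e2 j)) /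
        (((Hess u y).det) ^ (-(1 : ℝ) / 2)))
      = (1/2) * ∑ k : Fin 2, fderiv ℝ (fun z => (Hess u z)⁻¹ k i) y (e2 k) := by
  have hD := diff_at hU (smooth_det hU hu) hy
  have hDp : 0 < (Hess u y).det := (hpos y hy).det_pos
  have hH := fun i j => diff_at hU (smooth_hess hU hu i j) hy
  have hN : ∀ i j, DifferentiableAt ℝ (fun z => -Hess u z i j) y := fun i j => (hH i j).neg
  have s10 : Hess u y 1 0 = Hess u y 0 1 := hess_symm hU hu hy 1 0
  have s : (fun z => Hess u z 1 0) =ᶠ[nhds y] (fun z => Hess u z 0 1) := by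
    filter_upwards [hU.mem_nhds hy] with z hz using hess_symm hU hu hz 1 0
  have s' := s.fderiv_eq (𝕜 := ℝ)
  have t0 := third_symm hU hu hy 0 0 1
  have t1 := third_symm hU hu hy 1 0 1
  rw [s'] at t1
  have nn : ∀ i j, fderiv ℝ (fun z => -Hess u z i j) y = -fderiv ℝ (fun z => Hess u z i j) y :=
    fun i j => fderiv_fun_neg
  simp only [Fin.sum_univ_two, log_part hD hDp]
  simp only [inv_entry]
  fin_cases i
  · simp only [Fin.zero_eta, Matrix.of_apply, Matrix.cons_val', Matrix.cons_val_zero,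
      Matrix.cons_val_one, Matrix.cons_val_fin_one]
    rw [fderiv_quot (hH 1 1) hD hDp.ne', fderiv_quot (hN 1 0) hD hDp.ne', nn, s', s10]
    simp only [_root_.neg_apply, ← t1]
    field_simp
    ring
  · simp only [Fin.mk_one, Matrix.of_apply, Matrix.cons_val', Matrix.cons_val_zero,
      Matrix.cons_val_one, Matrix.cons_val_fin_one]
    rw [fderiv_quot (hH 0 0) hD hDp.ne', fderiv_quot (hN 0 1) hD hDp.ne', nn, s10]
    simp only [_root_.neg_apply, ← t0]
    field_simp
    ring

/-- The reverse direction of Donaldson's construction: if `u` is smooth on an open set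
`U ⊆ ℝ²` with positive definite Hessian, satisfying Abreu's equation
`∑_{j,k} ∂²u^{jk}/∂x_j∂x_k = 0` (where `(u^{jk})` is the inverse of the Hessian), and
`r := (det Hess u)^{−1/2}`, then `∑_{i,j} ∂/∂x_i (u^{ij}·(∂r/∂x_j)/r) = 0` on `U`;
i.e. the 1-form defining the harmonic conjugate coordinate `H` is closed. -/
theorem harmonic_conjugate_exists
    (U : Set (ℝ × ℝ)) (hUopen : IsOpen U)
    (u : ℝ × ℝ → ℝ) (hu : ContDiffOn ℝ (⊤ : ℕ∞) u U)
    (hpos : ∀ x ∈ U, (Hess u x).PosDef)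
    (habreu : ∀ x ∈ U, ∑ j : Fin 2, ∑ k : Fin 2,
        fderiv ℝ (fun y => fderiv ℝ (fun z => ((Hess u z)⁻¹) j k) y (e2 j)) x (e2 k)
          = 0) :
    ∀ x ∈ U, ∑ i : Fin 2,
        fderiv ℝ
          (fun y => ∑ j : Fin 2,
            ((Hess u y)⁻¹ i j) *
              (fderiv ℝ (fun z => ((Hess u z).det) ^ (-(1 : ℝ) / 2)) y (e2 j)) /
              (((Hess u y).det) ^ (-(1 : ℝ) / 2)))
          x (e2 i) = 0 := by
  intro x hx
  have hs := fun i k => diff_at hUopen (smooth_dir hUopen (smooth_inv hUopen hu hpos k i) (e2 k)) hx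
  have step : ∀ i : Fin 2, fderiv ℝ
          (fun y => ∑ j : Fin 2,
            ((Hess u y)⁻¹ i j) *
              (fderiv ℝ (fun z => ((Hess u z).det) ^ (-(1 : ℝ) / 2)) y (e2 j)) /
              (((Hess u y).det) ^ (-(1 : ℝ) / 2)))
          x (e2 i) = (1/2) * ∑ k : Fin 2,
        fderiv ℝ (fun y => fderiv ℝ (fun z => ((Hess u z)⁻¹) k i) y (e2 k)) x (e2 i) := by
    intro i
    have he : (fun y => ∑ j : Fin 2,
            ((Hess u y)⁻¹ i j) *
              (fderiv ℝ (fun z => ((Hess u z).det) ^ (-(1 : ℝ) / 2)) y (e2 j)) /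
              (((Hess u y).det) ^ (-(1 : ℝ) / 2))) =ᶠ[nhds x]
        (fun y => (1/2) * ∑ k : Fin 2, fderiv ℝ (fun z => (Hess u z)⁻¹ k i) y (e2 k)) := by
      filter_upwards [hUopen.mem_nhds hx] with y hy using key hUopen hu hpos hy i
    rw [he.fderiv_eq, fderiv_const_mul (DifferentiableAt.fun_sum fun k _ => hs i k),
      fderiv_fun_sum fun k _ => hs i k]
    simp
    ring
  simp only [step]
  rw [← Finset.mul_sum, Finset.sum_comm, habreu x hx, mul_zero]
end

section
/- Let B be an open subset of the half-plane ℍ = {(H,r) ∈ ℝ² : r > 0}. Let ξ : B → ℝ be a C² function satisfying the axi-symmetric harmonic equation ∂²ξ/∂H² + ∂²ξ/∂r² + (1/r)·∂ξ/∂r = 0 on B, and let μ : B → ℝ be a C² function satisfying ∂μ/∂H = r·∂ξ/∂r and ∂μ/∂r = −r·∂ξ/∂H on B. Then the function f := μ/r² satisfies ∂²f/∂H² + ∂²f/∂r² + (3/r)·∂f/∂r = 0 at every point of B. -/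
lemma hasFDerivAt_div_pow (g : ℝ × ℝ → ℝ) (p : ℝ × ℝ) (n : ℕ) (hp : p.2 ≠ 0)
    (hg : DifferentiableAt ℝ g p) :
    HasFDerivAt (fun q : ℝ × ℝ => g q / q.2 ^ n)
      ((1 / p.2 ^ n) • fderiv ℝ g p - (n * g p / p.2 ^ (n + 1)) • ContinuousLinearMap.snd ℝ ℝ ℝ) p := by
  have h1 : HasDerivAt (fun x : ℝ => (x ^ n)⁻¹) (-(n * p.2 ^ (n - 1)) / (p.2 ^ n) ^ 2) p.2 :=
    (hasDerivAt_pow n p.2).inv (pow_ne_zero n hp)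
  have h2 := h1.comp_hasFDerivAt p (hasFDerivAt_snd (𝕜 := ℝ) (E := ℝ) (F := ℝ) (p := p))
  have h3 := hg.hasFDerivAt.mul h2
  refine (h3.congr_fderiv ?_)
  ext <;> rcases n with _ | n <;> simp [Function.comp] <;> field_simp <;> ring

lemma pdH_div_pow (g : ℝ × ℝ → ℝ) (p : ℝ × ℝ) (n : ℕ) (hp : p.2 ≠ 0)
    (hg : DifferentiableAt ℝ g p) :
    pdH (fun q : ℝ × ℝ => g q / q.2 ^ n) p = pdH g p / p.2 ^ n := by
  unfold pdH
  rw [(hasFDerivAt_div_pow g p n hp hg).fderiv]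
  simp
  ring

lemma pdr_div_pow (g : ℝ × ℝ → ℝ) (p : ℝ × ℝ) (n : ℕ) (hp : p.2 ≠ 0)
    (hg : DifferentiableAt ℝ g p) :
    pdr (fun q : ℝ × ℝ => g q / q.2 ^ n) p = pdr g p / p.2 ^ n - n * g p / p.2 ^ (n + 1) := by
  unfold pdr
  rw [(hasFDerivAt_div_pow g p n hp hg).fderiv]
  simp
  ring

/-- Wright's lemma: if `ξ` is a `C²` solution of the axi-symmetric harmonic equation
`ξ_HH + ξ_rr + (1/r)·ξ_r = 0` on an open subset `B` of the half-plane `{r > 0}`, and `μ`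
is a `C²` function with `∂μ/∂H = r·∂ξ/∂r` and `∂μ/∂r = −r·∂ξ/∂H` on `B`, then
`f := μ/r²` satisfies `f_HH + f_rr + (3/r)·f_r = 0` on `B` (i.e. `f` is an
axi-symmetric harmonic function on `ℝ⁵`). -/
theorem wrights_lemma
    (B : Set (ℝ × ℝ)) (hBopen : IsOpen B) (hBhalf : ∀ p ∈ B, 0 < p.2)
    (ξ : ℝ × ℝ → ℝ) (hξ : ContDiffOn ℝ 2 ξ B)
    (hharm : ∀ p ∈ B,
      pdH (pdH ξ) p + pdr (pdr ξ) p + (1 / p.2) * pdr ξ p = 0)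
    (μ : ℝ × ℝ → ℝ) (hμ : ContDiffOn ℝ 2 μ B)
    (hμH : ∀ p ∈ B, pdH μ p = p.2 * pdr ξ p)
    (hμr : ∀ p ∈ B, pdr μ p = -(p.2 * pdH ξ p)) :
    ∀ p ∈ B,
      pdH (pdH (fun q => μ q / q.2 ^ 2)) p
        + pdr (pdr (fun q => μ q / q.2 ^ 2)) p
        + (3 / p.2) * pdr (fun q => μ q / q.2 ^ 2) p = 0 := by
  intro p hp
  have hne : ∀ q ∈ B, q.2 ≠ 0 := fun q hq => (hBhalf q hq).ne'
  have hBn : B ∈ nhds p := hBopen.mem_nhds hp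
  have hμd : ∀ q ∈ B, DifferentiableAt ℝ μ q := fun q hq =>
    (hμ.contDiffAt (hBopen.mem_nhds hq)).differentiableAt (by norm_num)
  have hξc : ContDiffAt ℝ 2 ξ p := hξ.contDiffAt hBn
  have hξ2 : DifferentiableAt ℝ (fderiv ℝ ξ) p :=
    (hξc.fderiv_right (m := 1) (by norm_num)).differentiableAt (by norm_num)
  have hdH : DifferentiableAt ℝ (pdH ξ) p := hξ2.clm_apply (differentiableAt_const _)
  have hdr : DifferentiableAt ℝ (pdr ξ) p := hξ2.clm_apply (differentiableAt_const _)
  have hsymm : pdH (pdr ξ) p = pdr (pdH ξ) p := by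
    have hs : IsSymmSndFDerivAt ℝ ξ p := hξc.isSymmSndFDerivAt (by simp)
    have e1 : pdH (pdr ξ) p = fderiv ℝ (fderiv ℝ ξ) p (1, 0) (0, 1) := by
      unfold pdH pdr
      rw [fderiv_clm_apply hξ2 (differentiableAt_const _)]
      simp
    have e2 : pdr (pdH ξ) p = fderiv ℝ (fderiv ℝ ξ) p (0, 1) (1, 0) := by
      unfold pdH pdr
      rw [fderiv_clm_apply hξ2 (differentiableAt_const _)]
      simp
    rw [e1, e2]
    exact hs _ _
  have hfH : pdH (fun q => μ q / q.2 ^ 2) =ᶠ[nhds p] fun q => pdr ξ q / q.2 ^ 1 := by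
    filter_upwards [hBn] with q hq
    have := hne q hq
    rw [pdH_div_pow μ q 2 this (hμd q hq), hμH q hq]
    field_simp
  have hfr : pdr (fun q => μ q / q.2 ^ 2) =ᶠ[nhds p]
      fun q => -(pdH ξ q / q.2 ^ 1) - 2 * (μ q / q.2 ^ 3) := by
    filter_upwards [hBn] with q hq
    have := hne q hq
    rw [pdr_div_pow μ q 2 this (hμd q hq), hμr q hq]
    push_cast
    field_simp
  have hp0 := hne p hp
  have hHH : pdH (pdH (fun q => μ q / q.2 ^ 2)) p = pdH (pdr ξ) p / p.2 ^ 1 := by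
    rw [← pdH_div_pow _ p 1 hp0 hdr]
    unfold pdH at hfH ⊢
    rw [hfH.fderiv_eq]
  have hrr : pdr (pdr (fun q => μ q / q.2 ^ 2)) p
      = -pdr (fun q => pdH ξ q / q.2 ^ 1) p - 2 * pdr (fun q => μ q / q.2 ^ 3) p := by
    have a := (hasFDerivAt_div_pow _ p 1 hp0 hdH).differentiableAt
    have b := (hasFDerivAt_div_pow _ p 3 hp0 (hμd p hp)).differentiableAt
    have c := (a.hasFDerivAt.neg.sub (b.hasFDerivAt.const_mul 2))
    have d := (c.congr_of_eventuallyEq hfr).fderiv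
    have e := congrArg (fun L => L ((0 : ℝ), (1 : ℝ))) d
    simpa [pdr] using e
  rw [hHH, hrr, hfr.eq_of_nhds, pdr_div_pow _ p 1 hp0 hdH, pdr_div_pow _ p 3 hp0 (hμd p hp),
    hμr p hp, hsymm]
  push_cast
  field_simp
  ring
end

section
/- There exists a constant C > 0 such that for every R > 0, the integral over the sphere ∂B(0,R) = {w ∈ ℝ⁵ : ‖w‖ = R} of the function w ↦ 1/(w₂²+w₃²+w₄²+w₅²) with respect to the 4-dimensional surface (Hausdorff) measure on the sphere satisfies ∫_{∂B(0,R)} (w₂²+w₃²+w₄²+w₅²)^{−1} dσ(w) ≤ C·R². -/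
open MeasureTheory

/-- Scaled inverse stereographic projection; `s = ±1` selects the pole. -/
noncomputable def sphPar (R s : ℝ) (y : EuclideanSpace ℝ (Fin 4)) : EuclideanSpace ℝ (Fin 5) :=
  !₂[s * R * (1 - ‖y‖ ^ 2) / (1 + ‖y‖ ^ 2), 2 * R * y 0 / (1 + ‖y‖ ^ 2),
    2 * R * y 1 / (1 + ‖y‖ ^ 2), 2 * R * y 2 / (1 + ‖y‖ ^ 2), 2 * R * y 3 / (1 + ‖y‖ ^ 2)]

lemma norm_sq_four (y : EuclideanSpace ℝ (Fin 4)) :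
    ‖y‖ ^ 2 = y 0 ^ 2 + y 1 ^ 2 + y 2 ^ 2 + y 3 ^ 2 := by
  rw [EuclideanSpace.real_norm_sq_eq, Fin.sum_univ_four]

lemma norm_sq_five (y : EuclideanSpace ℝ (Fin 5)) :
    ‖y‖ ^ 2 = y 0 ^ 2 + y 1 ^ 2 + y 2 ^ 2 + y 3 ^ 2 + y 4 ^ 2 := by
  rw [EuclideanSpace.real_norm_sq_eq, Fin.sum_univ_five]

lemma sphPar_lipschitz (R s : ℝ) (hR : 0 < R) (hs : s ^ 2 = 1) :
    LipschitzWith (Real.toNNReal (2 * R)) (sphPar R s) := by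
  apply LipschitzWith.of_dist_le_mul
  intro x y
  rw [Real.coe_toNNReal _ (by positivity), dist_eq_norm, dist_eq_norm]
  refine (sq_le_sq₀ (by positivity) (by positivity)).1 ?_
  have key : ‖sphPar R s x - sphPar R s y‖ ^ 2 =
      (2 * R * ‖x - y‖) ^ 2 / ((1 + ‖x‖ ^ 2) * (1 + ‖y‖ ^ 2)) := by
    rw [mul_pow _ ‖x - y‖, norm_sq_five, norm_sq_four (x - y)]
    simp only [sphPar, PiLp.sub_apply]
    have hx := norm_sq_four x
    have hy := norm_sq_four y
    have h1 : 0 < 1 + ‖x‖ ^ 2 := by positivity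
    have h2 : 0 < 1 + ‖y‖ ^ 2 := by positivity
    generalize ‖x‖ ^ 2 = a at *
    generalize ‖y‖ ^ 2 = b at *
    simp
    generalize x 0 = x0 at *
    generalize x 1 = x1 at *
    generalize x 2 = x2 at *
    generalize x 3 = x3 at *
    have e : (s * R * (1 - a) / (1 + a) - s * R * (1 - b) / (1 + b)) ^ 2
      = (R * (1 - a) / (1 + a) - R * (1 - b) / (1 + b)) ^ 2 := by
      rw [← one_mul ((R * (1 - a) / (1 + a) - R * (1 - b) / (1 + b)) ^ 2), ← hs]; ring
    rw [e]
    field_simp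
    subst hx hy
    ring
  rw [key]
  apply div_le_self (by positivity)
  nlinarith [sq_nonneg ‖x‖, sq_nonneg ‖y‖, mul_nonneg (sq_nonneg ‖x‖) (sq_nonneg ‖y‖)]

lemma sphPar_surj (R s : ℝ) (hR : 0 < R) (hs : s ^ 2 = 1) (w : EuclideanSpace ℝ (Fin 5))
    (hw : ‖w‖ = R) (h0 : 0 ≤ s * w 0) :
    ∃ y ∈ Metric.ball (0 : EuclideanSpace ℝ (Fin 4)) 2, sphPar R s y = w := by
  have hw2 := norm_sq_five w
  rw [hw] at hw2
  have hs0 : (s * w 0) ^ 2 = w 0 ^ 2 := by rw [mul_pow, hs, one_mul]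
  have hw0 : w 0 = s * (s * w 0) := by rw [← mul_assoc, ← sq, hs, one_mul]
  set a := s * w 0 with ha
  have hp : 0 < R + a := by positivity
  let y : EuclideanSpace ℝ (Fin 4) :=
    !₂[w 1 / (R + a), w 2 / (R + a), w 3 / (R + a), w 4 / (R + a)]
  have hy : ‖y‖ ^ 2 = (R - a) / (R + a) := by
    rw [norm_sq_four]
    simp [y]
    field_simp
    linarith
  refine ⟨y, ?_, ?_⟩
  · rw [mem_ball_zero_iff]
    have : ‖y‖ ^ 2 ≤ 1 := by
      rw [hy, div_le_one hp]; linarith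
    nlinarith [norm_nonneg y]
  · have h1 : 1 + ‖y‖ ^ 2 = 2 * R / (R + a) := by rw [hy]; field_simp; ring
    have h2 : 1 - ‖y‖ ^ 2 = 2 * a / (R + a) := by rw [hy]; field_simp; ring
    ext i
    simp only [sphPar]
    rw [h1, h2]
    fin_cases i
    · simp
      rw [hw0]
      field_simp
    all_goals
      simp [y]
      field_simp

lemma sphPar_inv (R s : ℝ) (hR : 0 < R) (y : EuclideanSpace ℝ (Fin 4))
    (hy : y ∈ Metric.ball (0 : EuclideanSpace ℝ (Fin 4)) 2) :
    ((sphPar R s y 1) ^ 2 + (sphPar R s y 2) ^ 2 + (sphPar R s y 3) ^ 2 + (sphPar R s y 4) ^ 2)⁻¹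
      ≤ 25 / 4 * (R ^ 2)⁻¹ * (‖y‖ ^ 2)⁻¹ := by
  rw [mem_ball_zero_iff] at hy
  have e : (sphPar R s y 1) ^ 2 + (sphPar R s y 2) ^ 2 + (sphPar R s y 3) ^ 2
      + (sphPar R s y 4) ^ 2 = 4 * R ^ 2 * ‖y‖ ^ 2 / (1 + ‖y‖ ^ 2) ^ 2 := by
    rw [show 4 * R ^ 2 * ‖y‖ ^ 2 / (1 + ‖y‖ ^ 2) ^ 2 =
      4 * R ^ 2 * (y 0 ^ 2 + y 1 ^ 2 + y 2 ^ 2 + y 3 ^ 2) / (1 + ‖y‖ ^ 2) ^ 2 by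
        rw [← norm_sq_four]]
    simp [sphPar]
    field_simp
    ring
  rw [e]
  have h : (1 + ‖y‖ ^ 2) ^ 2 ≤ 25 := by
    have : ‖y‖ ^ 2 ≤ 4 := by nlinarith [norm_nonneg y]
    nlinarith [sq_nonneg ‖y‖]
  calc (4 * R ^ 2 * ‖y‖ ^ 2 / (1 + ‖y‖ ^ 2) ^ 2)⁻¹
      = (1 + ‖y‖ ^ 2) ^ 2 * (1 / 4 * (R ^ 2)⁻¹ * (‖y‖ ^ 2)⁻¹) := by
        rw [inv_div, div_eq_mul_inv, mul_inv, mul_inv]; ring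
    _ ≤ 25 * (1 / 4 * (R ^ 2)⁻¹ * (‖y‖ ^ 2)⁻¹) := by gcongr
    _ = _ := by ring

lemma haar4 : (μH[4] : Measure (EuclideanSpace ℝ (Fin 4))).IsAddHaarMeasure := by
  have := isAddHaarMeasure_hausdorffMeasure (E := EuclideanSpace ℝ (Fin 4))
  simpa using this

lemma int_fin : ∫⁻ y in Metric.ball (0 : EuclideanSpace ℝ (Fin 4)) 2,
    ENNReal.ofReal ((‖y‖ ^ 2)⁻¹) ∂μH[4] < ⊤ := by
  have := haar4
  have h : IntegrableOn (fun y : EuclideanSpace ℝ (Fin 4) => (‖y‖ ^ 2)⁻¹) (Metric.ball 0 2)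
      μH[4] := by
    rw [integrableOn_fun_norm_addHaar (μ := μH[4]) (f := fun t : ℝ => (t ^ 2)⁻¹)]
    have : IntegrableOn (fun t : ℝ => t) (Set.Ioo 0 2) :=
      (continuous_id.integrableOn_Icc (a := (0:ℝ)) (b := 2)).mono_set Set.Ioo_subset_Icc_self
    refine this.congr_fun ?_ measurableSet_Ioo
    intro t ht
    have : t ≠ 0 := ht.1.ne'
    simp
    field_simp
  exact h.lintegral_lt_top

lemma half_bound (R s : ℝ) (hR : 0 < R) (hs : s ^ 2 = 1)
    (g : EuclideanSpace ℝ (Fin 5) → ENNReal) (hg : Measurable g) :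
    ∫⁻ w in Metric.sphere (0 : EuclideanSpace ℝ (Fin 5)) R ∩ {w | 0 ≤ s * w 0}, g w ∂ μH[4]
      ≤ ENNReal.ofReal ((2 * R) ^ 4) *
        ∫⁻ y in Metric.ball (0 : EuclideanSpace ℝ (Fin 4)) 2, g (sphPar R s y) ∂ μH[4] := by
  have hL := sphPar_lipschitz R s hR hs
  have hm : Measurable (sphPar R s) := hL.continuous.measurable
  rw [← lintegral_map hg hm, ← smul_eq_mul, ← lintegral_smul_measure]
  refine lintegral_mono' ?_ le_rfl
  rw [Measure.le_iff]
  intro A hA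
  rw [Measure.restrict_apply hA, Measure.smul_apply, Measure.map_apply hm hA,
    Measure.restrict_apply (hm hA)]
  calc _ ≤ μH[4] (sphPar R s '' (sphPar R s ⁻¹' A ∩ Metric.ball 0 2)) := by
        apply measure_mono
        rintro w ⟨hwA, hw, h0⟩
        obtain ⟨y, hy, rfl⟩ := sphPar_surj R s hR hs w (by simpa using hw) h0
        exact ⟨y, ⟨hwA, hy⟩, rfl⟩
    _ ≤ _ := hL.hausdorffMeasure_image_le (by norm_num) _
    _ = _ := by
        rw [smul_eq_mul, ENNReal.ofReal_pow (by positivity)]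
        congr 1
        exact_mod_cast ENNReal.rpow_natCast (ENNReal.ofReal (2 * R)) 4

/-- There is a constant `C > 0` such that for every `R > 0`, the integral over the sphere
of radius `R` in `ℝ⁵` of `1/(w₂² + w₃² + w₄² + w₅²)` (the inverse square of the distance
to the `w₁`-axis), with respect to the 4-dimensional Hausdorff (surface) measure, is at
most `C·R²`. -/
theorem sphere_integral_bound :
    ∃ C : ℝ, 0 < C ∧ ∀ R : ℝ, 0 < R →
      ∫⁻ w in Metric.sphere (0 : EuclideanSpace ℝ (Fin 5)) R,
          ENNReal.ofReal (((w 1) ^ 2 + (w 2) ^ 2 + (w 3) ^ 2 + (w 4) ^ 2)⁻¹)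
          ∂ μH[4]
        ≤ ENNReal.ofReal (C * R ^ 2) := by
  obtain ⟨I, hI⟩ : ∃ I, I = ∫⁻ y in Metric.ball (0 : EuclideanSpace ℝ (Fin 4)) 2,
    ENNReal.ofReal ((‖y‖ ^ 2)⁻¹) ∂μH[4] := ⟨_, rfl⟩
  have hIt : I ≠ ⊤ := hI ▸ int_fin.ne
  refine ⟨200 * I.toReal + 1, by positivity, ?_⟩
  intro R hR
  set g : EuclideanSpace ℝ (Fin 5) → ENNReal := fun w =>
    ENNReal.ofReal (((w 1) ^ 2 + (w 2) ^ 2 + (w 3) ^ 2 + (w 4) ^ 2)⁻¹) with hgdef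
  have hg : Measurable g := by
    rw [hgdef]
    fun_prop
  have half : ∀ s : ℝ, s ^ 2 = 1 →
      ∫⁻ w in Metric.sphere (0 : EuclideanSpace ℝ (Fin 5)) R ∩ {w | 0 ≤ s * w 0}, g w ∂ μH[4]
      ≤ ENNReal.ofReal (100 * R ^ 2 * I.toReal) := by
    intro s hs
    refine (half_bound R s hR hs g hg).trans ?_
    have h1 : ∫⁻ y in Metric.ball (0 : EuclideanSpace ℝ (Fin 4)) 2, g (sphPar R s y) ∂ μH[4]
        ≤ ENNReal.ofReal (25 / 4 * (R ^ 2)⁻¹) * I := by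
      rw [hI, ← lintegral_const_mul' _ _ ENNReal.ofReal_ne_top]
      refine setLIntegral_mono' measurableSet_ball ?_
      intro y hy
      rw [← ENNReal.ofReal_mul (by positivity)]
      exact ENNReal.ofReal_le_ofReal (sphPar_inv R s hR y hy)
    refine (mul_le_mul_right h1 _).trans ?_
    rw [← ENNReal.ofReal_toReal hIt, ← ENNReal.ofReal_mul (by positivity),
      ← ENNReal.ofReal_mul (by positivity), ENNReal.toReal_ofReal (by positivity)]
    apply le_of_eq
    congr 1
    field_simp
    ring
  have hcov : Metric.sphere (0 : EuclideanSpace ℝ (Fin 5)) R ⊆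
      (Metric.sphere (0 : EuclideanSpace ℝ (Fin 5)) R ∩ {w | 0 ≤ (1 : ℝ) * w 0}) ∪
      (Metric.sphere (0 : EuclideanSpace ℝ (Fin 5)) R ∩ {w | 0 ≤ (-1 : ℝ) * w 0}) := by
    intro w hw
    rcases le_total 0 (w 0) with h | h
    · left; exact ⟨hw, by simpa using h⟩
    · right; exact ⟨hw, by simpa using h⟩
  refine (lintegral_mono_set hcov).trans ((lintegral_union_le _ _ _).trans ?_)
  refine (add_le_add (half 1 (by norm_num)) (half (-1) (by norm_num))).trans ?_
  rw [← ENNReal.ofReal_add (by positivity) (by positivity)]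
  apply ENNReal.ofReal_le_ofReal
  nlinarith [sq_nonneg R]
end

section
/- Let f : ℝ⁵ → ℝ be a C² function that is harmonic on all of ℝ⁵ (i.e. ∑_{i=1}^{5} ∂²f/∂w_i² = 0 everywhere). Suppose there exists a constant C > 0 such that f(w) ≤ C·‖w‖/(w₂²+w₃²+w₄²+w₅²) for every w ∈ ℝ⁵ with w₂²+w₃²+w₄²+w₅² ≠ 0. Then f is constant. -/
/-- Second partial derivative of a function on `ℝ⁵` in the `i`-th coordinate direction. -/
noncomputable def pd2₅ (F : EuclideanSpace ℝ (Fin 5) → ℝ) (i : Fin 5)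
    (w : EuclideanSpace ℝ (Fin 5)) : ℝ :=
  fderiv ℝ (fun v => fderiv ℝ F v (EuclideanSpace.single i 1)) w (EuclideanSpace.single i 1)

open MeasureTheory

abbrev E5 := EuclideanSpace ℝ (Fin 5)

noncomputable def bk (k : ℕ) (x : E5) : ℝ := (max 0 (1 - ‖x‖ ^ 2)) ^ k

lemma bk_nonneg (k : ℕ) (x : E5) : 0 ≤ bk k x := by unfold bk; positivity

lemma bk_le_one (k : ℕ) (x : E5) : bk k x ≤ 1 := by
  unfold bk
  apply pow_le_one₀ (by positivity)
  apply max_le (by norm_num)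
  nlinarith [sq_nonneg ‖x‖]

lemma bk_cont (k : ℕ) : Continuous (bk k) := by unfold bk; fun_prop

lemma bk_zero (k : ℕ) (hk : k ≠ 0) (x : E5) (hx : 1 ≤ ‖x‖) : bk k x = 0 := by
  unfold bk
  rw [max_eq_left (by nlinarith), zero_pow hk]

lemma bk_supp (k : ℕ) (hk : k ≠ 0) : HasCompactSupport (bk k) := by
  apply HasCompactSupport.intro (isCompact_closedBall (0 : E5) 1)
  intro x hx
  apply bk_zero k hk
  simp at hx
  exact hx.le

lemma bk_int (k : ℕ) (hk : k ≠ 0) : Integrable (bk k) :=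
  (bk_cont k).integrable_of_hasCompactSupport (bk_supp k hk)

lemma mul_bk_int (k : ℕ) (hk : k ≠ 0) (u : E5 → ℝ) (hu : Continuous u) :
    Integrable (fun x => u x * bk k x) :=
  (hu.mul (bk_cont k)).integrable_of_hasCompactSupport ((bk_supp k hk).mul_left)

lemma hasDerivAt_pos_cube (s : ℝ) :
    HasDerivAt (fun s : ℝ => (max 0 s) ^ 3) (3 * (max 0 s) ^ 2) s := by
  have key : ∀ y : ℝ, y ≠ 0 → HasDerivAt (fun s : ℝ => (max 0 s) ^ 3) (3 * (max 0 y) ^ 2) y := by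
    intro y hy
    rcases lt_or_gt_of_ne hy with h | h
    · rw [max_eq_left h.le]
      have := hasDerivAt_const y (0 : ℝ)
      refine (this.congr_of_eventuallyEq ?_).congr_deriv (by norm_num)
      filter_upwards [gt_mem_nhds h] with z hz
      simp [max_eq_left (le_of_lt hz)]
    · rw [max_eq_right h.le]
      have := hasDerivAt_pow 3 y
      refine (this.congr_of_eventuallyEq ?_).congr_deriv (by norm_num)
      filter_upwards [lt_mem_nhds h] with z hz
      simp [max_eq_right (le_of_lt hz)]
  by_cases h : s = 0
  · subst h
    exact hasDerivAt_of_hasDerivAt_of_ne key (by fun_prop) (g := fun s => 3 * (max 0 s) ^ 2)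
      (by fun_prop)
  · exact key s h

lemma bk_hasFDerivAt (x : E5) :
    HasFDerivAt (bk 3) ((-6 * bk 2 x) • innerSL ℝ x) x := by
  have h1 : HasFDerivAt (fun x : E5 => 1 - ‖x‖ ^ 2) (-(2 • innerSL ℝ x)) x :=
    (HasStrictFDerivAt.hasFDerivAt (hasStrictFDerivAt_norm_sq x)).const_sub 1
  have h2 := (hasDerivAt_pos_cube (1 - ‖x‖ ^ 2)).comp_hasFDerivAt x h1
  refine h2.congr_fderiv ?_
  ext v
  simp [bk]
  ring

lemma bk_fderiv_single (x : E5) (i : Fin 5) :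
    fderiv ℝ (bk 3) x (EuclideanSpace.single i 1) = -6 * bk 2 x * x i := by
  rw [(bk_hasFDerivAt x).fderiv]
  simp [EuclideanSpace.inner_single_right]

lemma aff_int {f : E5 → ℝ} (hf : ContDiff ℝ 2 f) (z : E5) (t : ℝ) :
    Integrable (fun x => f (z + t • x) * bk 2 x) := by
  have := hf.continuous
  exact mul_bk_int 2 (by norm_num) (fun x => f (z + t • x)) (by fun_prop)

lemma ibp {f : E5 → ℝ} (hf : ContDiff ℝ 2 f) (z : E5) (t : ℝ) (i : Fin 5) :
    ∫ x, fderiv ℝ f (z + t • x) (EuclideanSpace.single i 1) * (-6 * bk 2 x * x i)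
      = - ∫ x, (t * pd2₅ f i (z + t • x)) * bk 3 x := by
  have hc1 : ContDiff ℝ 1 (fun v => fderiv ℝ f v (EuclideanSpace.single i 1)) :=
    (hf.fderiv_right (m := 1) (by norm_num)).clm_apply contDiff_const
  have hd (x : E5) : HasFDerivAt
      (fun x : E5 => fderiv ℝ f (z + t • x) (EuclideanSpace.single i 1))
      (t • fderiv ℝ (fun v => fderiv ℝ f v (EuclideanSpace.single i 1)) (z + t • x)) x := by
    have h1 := (hc1.differentiable (by norm_num) (z + t • x)).hasFDerivAt
    have h2 : HasFDerivAt (fun x : E5 => z + t • x) (t • ContinuousLinearMap.id ℝ E5) x :=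
      ((hasFDerivAt_id x).const_smul t).const_add z
    refine (h1.comp x h2).congr_fderiv ?_
    ext v
    simp
  have hd' (x : E5) : fderiv ℝ
      (fun x : E5 => fderiv ℝ f (z + t • x) (EuclideanSpace.single i 1)) x
        (EuclideanSpace.single i 1) = t * pd2₅ f i (z + t • x) := by
    rw [(hd x).fderiv]; simp [pd2₅]
  have hcont1 : Continuous (fun x : E5 => fderiv ℝ f (z + t • x) (EuclideanSpace.single i 1)) :=
    hc1.continuous.comp (by fun_prop : Continuous fun x : E5 => z + t • x)
  have hcont2 : Continuous (pd2₅ f i) :=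
    (hc1.continuous_fderiv (by norm_num)).clm_apply continuous_const
  have := integral_mul_fderiv_eq_neg_fderiv_mul_of_integrable (μ := (volume : Measure E5))
    (f := fun x : E5 => fderiv ℝ f (z + t • x) (EuclideanSpace.single i 1))
    (g := bk 3) (v := EuclideanSpace.single i 1) ?_ ?_ ?_ ?_ ?_
  · simpa only [bk_fderiv_single, hd'] using this
  · simp only [hd']
    exact mul_bk_int 3 (by norm_num) _ (by fun_prop)
  · simp only [bk_fderiv_single]
    have := mul_bk_int 2 (by norm_num)
      (fun x : E5 => fderiv ℝ f (z + t • x) (EuclideanSpace.single i 1) * (-6 * x i)) (by fun_prop)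
    refine this.congr (ae_of_all _ fun x => ?_)
    simp only; ring
  · exact mul_bk_int 3 (by norm_num) _ hcont1
  · exact fun x _ => (hd x).differentiableAt
  · exact fun x _ => (bk_hasFDerivAt x).differentiableAt

lemma radial_deriv_zero {f : E5 → ℝ} (hf : ContDiff ℝ 2 f)
    (hharm : ∀ w : E5, ∑ i : Fin 5, pd2₅ f i w = 0) (z : E5) (t : ℝ) :
    ∫ x, fderiv ℝ f (z + t • x) x * bk 2 x = 0 := by
  have hx (x : E5) : x = ∑ i, x i • (EuclideanSpace.single i 1 : E5) := by
    have := (EuclideanSpace.basisFun (Fin 5) ℝ).sum_repr x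
    simpa using this.symm
  have hcf := hf.continuous_fderiv (by norm_num)
  have h1 (x : E5) : fderiv ℝ f (z + t • x) x * bk 2 x
      = ∑ i, (-1/6) * (fderiv ℝ f (z + t • x) (EuclideanSpace.single i 1) * (-6 * bk 2 x * x i)) := by
    conv_lhs => rw [show fderiv ℝ f (z + t • x) x = fderiv ℝ f (z + t • x)
      (∑ i, x i • (EuclideanSpace.single i 1 : E5)) from congrArg _ (hx x)]
    rw [map_sum, Finset.sum_mul]
    refine Finset.sum_congr rfl fun i _ => ?_
    rw [map_smul, smul_eq_mul]; ring
  simp_rw [h1]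
  rw [integral_finsetSum]
  · simp_rw [integral_const_mul, ibp hf z t]
    rw [← Finset.mul_sum, Finset.sum_neg_distrib, ← integral_finsetSum]
    · simp_rw [← Finset.sum_mul, ← Finset.mul_sum, hharm]
      simp
    · intro i _
      have hc1 : ContDiff ℝ 1 (fun v => fderiv ℝ f v (EuclideanSpace.single i 1)) :=
        (hf.fderiv_right (m := 1) (by norm_num)).clm_apply contDiff_const
      have hcont2 : Continuous (pd2₅ f i) :=
        (hc1.continuous_fderiv (by norm_num)).clm_apply continuous_const
      exact mul_bk_int 3 (by norm_num) _ (by fun_prop)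
  · intro i _
    have := mul_bk_int 2 (by norm_num)
      (fun x : E5 => fderiv ℝ f (z + t • x) (EuclideanSpace.single i 1) * x i) (by fun_prop)
    refine this.congr (ae_of_all _ fun x => ?_)
    simp only; ring

lemma mean_value {f : E5 → ℝ} (hf : ContDiff ℝ 2 f)
    (hharm : ∀ w : E5, ∑ i : Fin 5, pd2₅ f i w = 0) (z : E5) (t : ℝ) :
    ∫ x, f (z + t • x) * bk 2 x = f z * ∫ x, bk 2 x := by
  have hcf := hf.continuous_fderiv (by norm_num)
  have hD (t₀ : ℝ) : HasDerivAt (fun t : ℝ => ∫ x, f (z + t • x) * bk 2 x) 0 t₀ := by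
    have hK : IsCompact (Metric.closedBall t₀ 1 ×ˢ Metric.closedBall (0 : E5) 1) :=
      (isCompact_closedBall _ _).prod (isCompact_closedBall _ _)
    obtain ⟨B, hB⟩ := hK.exists_bound_of_continuousOn
      (f := fun p : ℝ × E5 => fderiv ℝ f (z + p.1 • p.2) p.2) (by fun_prop)
    have := (hasDerivAt_integral_of_dominated_loc_of_deriv_le (μ := (volume : Measure E5))
      (F := fun t x => f (z + t • x) * bk 2 x)
      (F' := fun t x => fderiv ℝ f (z + t • x) x * bk 2 x) (x₀ := t₀)
      (bound := fun x => B * bk 2 x) (Metric.closedBall_mem_nhds t₀ one_pos)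
      (Filter.Eventually.of_forall fun t => (aff_int hf z t).aestronglyMeasurable)
      (aff_int hf z t₀)
      (mul_bk_int 2 (by norm_num) (fun x => fderiv ℝ f (z + t₀ • x) x)
        (by fun_prop)).aestronglyMeasurable
      (ae_of_all _ fun x t ht => ?_) ((bk_int 2 (by norm_num)).const_mul B)
      (ae_of_all _ fun x t ht => ?_)).2
    · rwa [radial_deriv_zero hf hharm] at this
    · rw [norm_mul, Real.norm_of_nonneg (bk_nonneg 2 x)]
      by_cases hx : ‖x‖ ≤ 1
      · exact mul_le_mul_of_nonneg_right (hB (t, x) ⟨ht, by simpa using hx⟩) (bk_nonneg 2 x)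
      · rw [bk_zero 2 (by norm_num) x (by linarith)]; simp
    · have h1 := (hf.differentiable (by norm_num) (z + t • x)).hasFDerivAt
      have h2 : HasDerivAt (fun t : ℝ => z + t • x) x t := by
        simpa using ((hasDerivAt_id t).smul_const x).const_add z
      exact (h1.comp_hasDerivAt t h2).mul_const _
  have := is_const_of_deriv_eq_zero (fun t => (hD t).differentiableAt) (fun t => (hD t).deriv) t 0
  rw [this]
  simp [integral_const_mul]

lemma bk_pos : 0 < ∫ x, bk 2 x := by
  apply (bk_cont 2).integral_pos_of_hasCompactSupport_nonneg_nonzero (bk_supp 2 (by norm_num))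
    (fun x => bk_nonneg 2 x) (x := 0)
  simp [bk]

lemma harnack {f : E5 → ℝ} (hf : ContDiff ℝ 2 f)
    (hharm : ∀ w : E5, ∑ i : Fin 5, pd2₅ f i w = 0) (s : ℝ) (hs : ∀ w, f w ≤ s) (z z' : E5) :
    (49/256) * (s - f z) ≤ 32 * (s - f z') := by
  have mv (z : E5) (t : ℝ) : ∫ x, (s - f (z + t • x)) * bk 2 x = (s - f z) * ∫ x, bk 2 x := by
    simp_rw [sub_mul]
    rw [integral_sub ((bk_int 2 (by norm_num)).const_mul s) (aff_int hf z t),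
      integral_const_mul, mean_value hf hharm]
  set R : ℝ := 2 * ‖z - z'‖ + 1 with hR
  have hRpos : 0 < R := by positivity
  set b : E5 := (2 * R)⁻¹ • (z - z') with hb
  have hbn : ‖b‖ ≤ 1 / 4 := by
    rw [hb, norm_smul, Real.norm_of_nonneg (by positivity), inv_mul_le_iff₀ (by positivity)]
    linarith
  have hcf := hf.continuous
  have e1 : ∫ x, (s - f (z + R • x)) * bk 2 (b + (1/2 : ℝ) • x)
      = 32 * ((s - f z') * ∫ x, bk 2 x) := by
    rw [← mv z' (2 * R)]
    rw [← integral_add_left_eq_self (fun x => (s - f (z' + (2 * R) • x)) * bk 2 x) b]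
    have := Measure.integral_comp_smul (volume : Measure E5)
      (fun x => (s - f (z' + (2 * R) • (b + x))) * bk 2 (b + x)) (1/2)
    rw [show |((1/2 : ℝ) ^ Module.finrank ℝ E5)⁻¹| = 32 by simp; norm_num] at this
    rw [smul_eq_mul] at this
    rw [← this]
    congr 1
    ext x
    congr 3
    rw [hb, smul_add, smul_smul, smul_smul, mul_inv_cancel₀ (by positivity), one_smul,
      show 2 * R * (1/2) = R by ring]
    abel
  have e2 : (49/256) * ∫ x, (s - f (z + R • x)) * bk 2 x
      ≤ ∫ x, (s - f (z + R • x)) * bk 2 (b + (1/2 : ℝ) • x) := by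
    rw [← integral_const_mul]
    refine integral_mono ((mul_bk_int 2 (by norm_num) _ (by fun_prop)).const_mul _) ?_ fun x => ?_
    · have hcb := bk_cont 2
      apply Continuous.integrable_of_hasCompactSupport (by fun_prop)
      apply HasCompactSupport.intro (isCompact_closedBall (0 : E5) 3)
      intro x hx
      simp at hx
      rw [bk_zero 2 (by norm_num), mul_zero]
      have h3 : ‖(1/2 : ℝ) • x‖ ≤ ‖b + (1/2 : ℝ) • x‖ + ‖b‖ := by
        simpa using norm_sub_le (b + (1/2 : ℝ) • x) b
      rw [norm_smul (1/2 : ℝ) x, show ‖(1/2 : ℝ)‖ = 1/2 by norm_num] at h3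
      linarith
    · have h0 : 0 ≤ s - f (z + R • x) := by linarith [hs (z + R • x)]
      have h4 : 49/256 * bk 2 x ≤ bk 2 (b + (1/2 : ℝ) • x) := by
        by_cases hx : ‖x‖ ≤ 1
        · have h3 := norm_add_le b ((1/2 : ℝ) • x)
          rw [norm_smul (1/2 : ℝ) x, show ‖(1/2 : ℝ)‖ = 1/2 by norm_num] at h3
          have h5 : ‖b + (1/2 : ℝ) • x‖ ≤ 3/4 := by linarith
          have h6 : (7/16 : ℝ) ≤ max 0 (1 - ‖b + (1/2 : ℝ) • x‖ ^ 2) := by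
            apply le_max_of_le_right
            nlinarith [norm_nonneg (b + (1/2 : ℝ) • x)]
          have h7 : (7/16 : ℝ)^2 ≤ bk 2 (b + (1/2 : ℝ) • x) := by
            unfold bk; gcongr
          linarith [bk_le_one 2 x]
        · rw [bk_zero 2 (by norm_num) x (by linarith)]
          simpa using bk_nonneg 2 _
      simp only
      nlinarith
  rw [mv, e1] at e2
  have := bk_pos
  by_contra! hcon
  nlinarith

lemma g_int : IntegrableOn (fun x : ℝ => |x| ^ (-(1/2) : ℝ)) (Set.Icc (-2) 2) := by
  have h1 : IntervalIntegrable (fun x : ℝ => |x| ^ (-(1/2) : ℝ)) volume 0 2 := by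
    refine (intervalIntegral.intervalIntegrable_rpow' (a := 0) (b := 2) (r := -(1/2))
      (by norm_num)).congr ?_
    intro x hx
    rw [Set.uIoc_of_le (by norm_num)] at hx
    simp only
    rw [abs_of_pos hx.1]
  have h2 : IntervalIntegrable (fun x : ℝ => |x| ^ (-(1/2) : ℝ)) volume (-2) 0 := by
    have := (IntervalIntegrable.iff_comp_neg).1 h1
    simpa using this.symm
  have := h2.trans h1
  rwa [intervalIntegrable_iff_integrableOn_Icc_of_le (by norm_num)] at this

noncomputable def gk (i : Fin 5) : ℝ → ℝ :=
  (Set.Icc (-2 : ℝ) 2).indicator (if i = 0 then fun _ => 1 else fun x => |x| ^ (-(1/2) : ℝ))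

noncomputable def Gk (x : E5) : ℝ := ∏ i, gk i (x i)

lemma gk_nonneg (i : Fin 5) (x : ℝ) : 0 ≤ gk i x := by
  unfold gk
  apply Set.indicator_nonneg
  intro x _
  split_ifs <;> positivity

lemma Gk_nonneg (x : E5) : 0 ≤ Gk x := Finset.prod_nonneg fun i _ => gk_nonneg i _

lemma Gk_int : Integrable Gk := by
  have h : ∀ i, Integrable (gk i) := by
    intro i
    unfold gk
    rw [integrable_indicator_iff measurableSet_Icc]
    split_ifs
    · simp
    · exact g_int
  have h1 := Integrable.fintype_prod (μ := fun _ : Fin 5 => (volume : Measure ℝ)) h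
  exact (PiLp.volume_preserving_ofLp (Fin 5)).integrable_comp_of_integrable h1

lemma ae_ne : ∀ᵐ x : E5, ∀ i, x i ≠ 0 := by
  rw [ae_all_iff]
  intro i
  have h := Measure.ae_eval_ne (fun _ : Fin 5 => (volume : Measure ℝ)) i 0
  exact (PiLp.volume_preserving_ofLp (Fin 5)).quasiMeasurePreserving.ae h

lemma Gk_bound (x : E5) (hx : ∀ i, x i ≠ 0) (hn : ‖x‖ ≤ 2) :
    1 / ((x 1) ^ 2 + (x 2) ^ 2 + (x 3) ^ 2 + (x 4) ^ 2) ≤ Gk x := by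
  have hi (i : Fin 5) : x i ∈ Set.Icc (-2 : ℝ) 2 := by
    have := PiLp.norm_apply_le x i
    rw [Real.norm_eq_abs] at this
    exact abs_le.1 (this.trans hn)
  have hsq (i : Fin 5) : |x i| ^ (-(1/2) : ℝ) = (((x i) ^ 2) ^ (1/4 : ℝ))⁻¹ := by
    rw [← sq_abs, ← Real.rpow_natCast, ← Real.rpow_mul (abs_nonneg _),
      ← Real.rpow_neg (abs_nonneg _)]
    norm_num
  have hG : Gk x = (((x 1) ^ 2) ^ (1/4 : ℝ) * ((x 2) ^ 2) ^ (1/4 : ℝ) * ((x 3) ^ 2) ^ (1/4 : ℝ)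
      * ((x 4) ^ 2) ^ (1/4 : ℝ))⁻¹ := by
    unfold Gk gk
    rw [Fin.prod_univ_five]
    simp only [Set.indicator_of_mem (hi _)]
    rw [if_pos trivial, if_neg (by decide), if_neg (by decide), if_neg (by decide), if_neg (by decide)]
    simp only [hsq, mul_inv]
    ring
  have am := Real.geom_mean_le_arith_mean4_weighted (w₁ := 1/4) (w₂ := 1/4) (w₃ := 1/4)
    (w₄ := 1/4) (by norm_num) (by norm_num) (by norm_num) (by norm_num) (sq_nonneg (x 1))
    (sq_nonneg (x 2)) (sq_nonneg (x 3)) (sq_nonneg (x 4)) (by norm_num)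
  rw [hG, one_div]
  have hp (i : Fin 5) : 0 < ((x i) ^ 2) ^ (1/4 : ℝ) :=
    Real.rpow_pos_of_pos (by have := hx i; positivity) _
  have := hp 1
  have := hp 2
  have := hp 3
  have := hp 4
  apply inv_anti₀ (by positivity)
  nlinarith [sq_nonneg (x 1), sq_nonneg (x 2), sq_nonneg (x 3), sq_nonneg (x 4)]

lemma ub {f : E5 → ℝ} (hf : ContDiff ℝ 2 f)
    (hharm : ∀ w : E5, ∑ i : Fin 5, pd2₅ f i w = 0) (C : ℝ) (hC : 0 < C)
    (hbound : ∀ w : EuclideanSpace ℝ (Fin 5),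
      (w 1) ^ 2 + (w 2) ^ 2 + (w 3) ^ 2 + (w 4) ^ 2 ≠ 0 →
      f w ≤ C * ‖w‖ / ((w 1) ^ 2 + (w 2) ^ 2 + (w 3) ^ 2 + (w 4) ^ 2)) (z : E5)
    (t : ℝ) (ht : 0 < t) (hz : ‖z‖ ≤ t) :
    (f z * ∫ x, bk 2 x) * t ≤ 2 * C * ∫ x, Gk x := by
  set a : E5 := t⁻¹ • z with ha
  have han : ‖a‖ ≤ 1 := by
    rw [ha, norm_smul, Real.norm_of_nonneg (by positivity), inv_mul_le_iff₀ ht]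
    linarith
  have haz (x : E5) : z + t • x = t • (a + x) := by
    rw [ha, smul_add, smul_smul, mul_inv_cancel₀ ht.ne', one_smul]
  rw [← mean_value hf hharm z t, ← integral_add_left_eq_self Gk a, ← integral_const_mul,
    ← integral_mul_const]
  refine integral_mono_ae ((aff_int hf z t).mul_const t)
    ((Gk_int.comp_add_left a).const_mul _) ?_
  have hae : ∀ᵐ x : E5, ∀ i, (a + x) i ≠ 0 :=
    (measurePreserving_add_left (volume : Measure E5) a).quasiMeasurePreserving.ae ae_ne
  filter_upwards [hae] with x hx
  have hG0 := Gk_nonneg (a + x)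
  by_cases hx1 : ‖x‖ ≤ 1
  · have hn : ‖a + x‖ ≤ 2 := (norm_add_le a x).trans (by linarith)
    have hg := Gk_bound (a + x) hx hn
    set y := a + x with hy
    set r2 := (y 1) ^ 2 + (y 2) ^ 2 + (y 3) ^ 2 + (y 4) ^ 2 with hr
    have hr2 : 0 < r2 := by have := hx 1; positivity
    have e : ((t • y) 1) ^ 2 + ((t • y) 2) ^ 2 + ((t • y) 3) ^ 2 + ((t • y) 4) ^ 2 = t ^ 2 * r2 := by
      simp [hr]; ring
    have hb := hbound (t • y) (by rw [e]; positivity)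
    rw [e, norm_smul, Real.norm_of_nonneg ht.le] at hb
    have h2 : f (t • y) * t ≤ 2 * C * Gk y := by
      calc f (t • y) * t ≤ C * (t * ‖y‖) / (t ^ 2 * r2) * t := by gcongr
        _ = C * ‖y‖ * (1 / r2) := by field_simp
        _ ≤ C * 2 * Gk y := by gcongr
        _ = _ := by ring
    rw [haz]
    calc f (t • y) * bk 2 x * t = (f (t • y) * t) * bk 2 x := by ring
      _ ≤ (2 * C * Gk y) * bk 2 x := mul_le_mul_of_nonneg_right h2 (bk_nonneg 2 x)
      _ ≤ (2 * C * Gk y) * 1 := mul_le_mul_of_nonneg_left (bk_le_one 2 x) (by positivity)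
      _ = _ := by ring
  · rw [bk_zero 2 (by norm_num) x (by linarith)]
    simp only [mul_zero, zero_mul]
    positivity

theorem harmonic_bounded_by_axis_is_constant
    (f : EuclideanSpace ℝ (Fin 5) → ℝ) (hf : ContDiff ℝ 2 f)
    (hharm : ∀ w : EuclideanSpace ℝ (Fin 5), ∑ i : Fin 5, pd2₅ f i w = 0)
    (C : ℝ) (hC : 0 < C)
    (hbound : ∀ w : EuclideanSpace ℝ (Fin 5),
      (w 1) ^ 2 + (w 2) ^ 2 + (w 3) ^ 2 + (w 4) ^ 2 ≠ 0 →
      f w ≤ C * ‖w‖ / ((w 1) ^ 2 + (w 2) ^ 2 + (w 3) ^ 2 + (w 4) ^ 2)) :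
    ∃ c : ℝ, ∀ w, f w = c := by
  have hI := bk_pos
  have hle : ∀ z, f z ≤ 0 := by
    intro z
    by_contra! hz
    have hp : 0 < f z * ∫ x, bk 2 x := mul_pos hz hI
    have hK : 0 ≤ ∫ x, Gk x := integral_nonneg Gk_nonneg
    set q := (2 * C * ∫ x, Gk x) / (f z * ∫ x, bk 2 x) with hq
    have hq0 : 0 ≤ q := by positivity
    have := ub hf hharm C hC hbound z (q + ‖z‖ + 1) (by positivity) (by linarith)
    have e : (f z * ∫ x, bk 2 x) * q = 2 * C * ∫ x, Gk x := by
      rw [hq]; field_simp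
    nlinarith [norm_nonneg z, mul_nonneg hp.le (norm_nonneg z)]
  have hbdd : BddAbove (Set.range f) := ⟨0, by rintro _ ⟨w, rfl⟩; exact hle w⟩
  refine ⟨⨆ w, f w, fun w => ?_⟩
  apply le_antisymm (le_ciSup hbdd w)
  by_contra! hlt
  set s := ⨆ w, f w with hs
  obtain ⟨z', hz'⟩ := exists_lt_of_lt_ciSup
    (show s - (49/256) * (s - f w) / 64 < ⨆ w, f w by rw [← hs]; linarith)
  have := harnack hf hharm s (fun w => le_ciSup hbdd w) w z'
  linarith
end

section
/- Let U ⊆ ℂ be open, let a ∈ U, and let f be holomorphic on U \ {a}. Suppose f has a pole at a in the sense that ‖f(z)‖ → ∞ as z → a with z ≠ a. Then the image of f is not contained in the open upper half-plane: there exists z ∈ U \ {a} with Im(f(z)) ≤ 0. -/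
open Filter

/-- A holomorphic function with a pole cannot take values only in the open upper
half-plane: if `f` is holomorphic on `U \ {a}` (with `U` open, `a ∈ U`) and
`‖f(z)‖ → ∞` as `z → a`, `z ≠ a`, then there is some `z ∈ U \ {a}` with `Im(f z) ≤ 0`. -/
theorem pole_image_not_in_upper_half_plane
    (U : Set ℂ) (hU : IsOpen U) (a : ℂ) (ha : a ∈ U)
    (f : ℂ → ℂ) (hf : DifferentiableOn ℂ f (U \ {a}))
    (hpole : Tendsto (fun z => ‖f z‖) (nhdsWithin a {a}ᶜ) atTop) :
    ∃ z ∈ U \ {a}, (f z).im ≤ 0 := by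
  by_contra hcon
  push Not at hcon
  have hne : ∀ z ∈ U \ {a}, f z ≠ 0 := by
    intro z hz h0
    have := hcon z hz
    simp [h0] at this
  set g : ℂ → ℂ := Function.update (fun z => (f z)⁻¹) a 0 with hg
  have hga : g a = 0 := by simp [hg]
  have hgz : ∀ z, z ≠ a → g z = (f z)⁻¹ := fun z hz => by simp [hg, hz]
  have hUn : U ∈ nhds a := hU.mem_nhds ha
  have hcont : ContinuousAt g a := by
    rw [hg, continuousAt_update_same]
    exact tendsto_inv₀_cobounded.comp (tendsto_norm_atTop_iff_cobounded.1 hpole)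
  have hUw : ∀ᶠ z in nhdsWithin a {a}ᶜ, z ∈ U \ {a} := by
    filter_upwards [mem_nhdsWithin_of_mem_nhds hUn, self_mem_nhdsWithin] with z h1 h2
    exact ⟨h1, h2⟩
  have hopen : IsOpen (U \ {a}) := hU.sdiff isClosed_singleton
  have hd : ∀ᶠ z in nhdsWithin a {a}ᶜ, DifferentiableAt ℂ g z := by
    filter_upwards [hUw] with z hz
    have h1 : DifferentiableAt ℂ (fun z => (f z)⁻¹) z :=
      (hf.differentiableAt (hopen.mem_nhds hz)).inv (hne z hz)
    refine h1.congr_of_eventuallyEq ?_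
    filter_upwards [hopen.mem_nhds hz] with w hw
    exact hgz w hw.2
  have han : AnalyticAt ℂ g a :=
    Complex.analyticAt_of_differentiable_on_punctured_nhds_of_continuousAt hd hcont
  rcases han.eventually_constant_or_nhds_le_map_nhds with h | h
  · obtain ⟨z, hz, hz2⟩ := ((h.filter_mono nhdsWithin_le_nhds).and hUw).exists
    rw [hga, hgz z hz2.2] at hz
    exact hne z hz2 (inv_eq_zero.1 hz)
  · rw [hga] at h
    have himg : Set.image g U ∈ nhds (0 : ℂ) := h (image_mem_map hUn)
    obtain ⟨ε, hε, hb⟩ := Metric.mem_nhds_iff.1 himg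
    have hmem : (((ε / 2 : ℝ) : ℂ) * Complex.I) ∈ Metric.ball (0 : ℂ) ε := by
      rw [mem_ball_zero_iff, norm_mul, Complex.norm_I, Complex.norm_real, Real.norm_eq_abs,
        abs_of_pos (by positivity)]
      linarith
    obtain ⟨z, hzU, hz⟩ := hb hmem
    have hza : z ≠ a := by
      rintro rfl
      rw [hga] at hz
      have := congrArg Complex.im hz
      simp at this
      linarith
    rw [hgz z hza] at hz
    have hpos := hcon z ⟨hzU, hza⟩
    have him := congrArg Complex.im hz
    rw [Complex.inv_im, Complex.im_ofReal_mul, Complex.I_im, mul_one] at him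
    have hle : -(f z).im / Complex.normSq (f z) ≤ 0 :=
      div_nonpos_of_nonpos_of_nonneg (by linarith) (Complex.normSq_nonneg _)
    linarith
end

section
/- Let f be holomorphic and injective on the punctured unit disc D \ {0} = {z ∈ ℂ : 0 < ‖z‖ < 1}. Then 0 is not an essential singularity of f: either f is bounded on some punctured neighbourhood of 0 (so the singularity is removable), or ‖f(z)‖ → ∞ as z → 0 (so f has a pole at 0). -/
open Filter

/-- An injective holomorphic function on the punctured unit disc has no essential
singularity at `0`: either it is bounded on some punctured neighbourhood of `0`
(removable singularity), or `‖f(z)‖ → ∞` as `z → 0` (pole). -/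
theorem injective_holomorphic_no_essential_singularity
    (f : ℂ → ℂ)
    (hf : DifferentiableOn ℂ f (Metric.ball (0 : ℂ) 1 \ {0}))
    (hinj : Set.InjOn f (Metric.ball (0 : ℂ) 1 \ {0})) :
    (∃ ε : ℝ, 0 < ε ∧ ε ≤ 1 ∧ ∃ M : ℝ,
        ∀ z ∈ Metric.ball (0 : ℂ) ε \ {0}, ‖f z‖ ≤ M) ∨
    Tendsto (fun z => ‖f z‖) (nhdsWithin 0 {0}ᶜ) atTop := by
  have hopen : IsOpen (Metric.ball (0 : ℂ) 1 \ {0}) :=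
    Metric.isOpen_ball.sdiff isClosed_singleton
  have hmem : (1 / 2 : ℂ) ∈ Metric.ball (0 : ℂ) 1 \ {0} := by
    constructor
    · rw [mem_ball_zero_iff]; norm_num
    · simp
  have han : AnalyticAt ℂ f (1 / 2) := hf.analyticAt (hopen.mem_nhds hmem)
  -- the image of a ball around 1/2 is a neighbourhood of f (1/2)
  have hnhds : nhds (f (1 / 2)) ≤ map f (nhds (1 / 2)) := by
    refine han.eventually_constant_or_nhds_le_map_nhds.resolve_left fun hc => ?_
    have h1 : ∀ᶠ z in nhds (1 / 2 : ℂ), z = 1 / 2 := by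
      filter_upwards [hc, hopen.mem_nhds hmem] with z hz hz'
      exact hinj hz' hmem hz
    have h2 : ∀ᶠ z in nhdsWithin (1 / 2 : ℂ) {1 / 2}ᶜ, False := by
      filter_upwards [h1.filter_mono nhdsWithin_le_nhds, self_mem_nhdsWithin] with z hz hz'
      exact hz' hz
    exact h2.exists.elim fun _ h => h
  have himg : f '' Metric.ball (1 / 2) (1 / 4) ∈ nhds (f (1 / 2)) :=
    hnhds (image_mem_map (Metric.ball_mem_nhds _ (by norm_num)))
  obtain ⟨δ, hδ, hball⟩ := Metric.mem_nhds_iff.1 himg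
  have hsmall : ∀ᶠ z in nhdsWithin (0 : ℂ) {0}ᶜ, z ∈ Metric.ball (0 : ℂ) (1 / 4) \ {0} := by
    filter_upwards [mem_nhdsWithin_of_mem_nhds (Metric.ball_mem_nhds (0 : ℂ)
      (by norm_num : (0 : ℝ) < 1 / 4)), self_mem_nhdsWithin] with z h1 h2
    exact ⟨h1, h2⟩
  have hsub : Metric.ball (0 : ℂ) (1 / 4) \ {0} ⊆ Metric.ball (0 : ℂ) 1 \ {0} :=
    Set.sdiff_subset_sdiff_left (Metric.ball_subset_ball (by norm_num))
  have hfar : ∀ z ∈ Metric.ball (0 : ℂ) (1 / 4) \ {0}, δ ≤ ‖f z - f (1 / 2)‖ := by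
    intro z hz
    by_contra! hlt
    obtain ⟨y, hy, hyz⟩ := hball (show f z ∈ Metric.ball (f (1 / 2)) δ by
      rwa [mem_ball_iff_norm])
    have hz4 : ‖z‖ < 1 / 4 := by simpa using hz.1
    have hy4 : ‖y - 1 / 2‖ < 1 / 4 := by rwa [mem_ball_iff_norm] at hy
    have hhalf : ‖(1 / 2 : ℂ)‖ = 1 / 2 := by norm_num
    have hylow : 1 / 4 < ‖y‖ := by
      have := norm_sub_norm_le (1 / 2 : ℂ) y
      rw [norm_sub_rev] at this
      linarith
    have hyup : ‖y‖ < 1 := by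
      have := norm_sub_norm_le y (1 / 2 : ℂ)
      linarith
    have hymem : y ∈ Metric.ball (0 : ℂ) 1 \ {0} := by
      refine ⟨by simpa using hyup, ?_⟩
      rintro rfl
      simp at hylow
      linarith
    have := hinj hymem (hsub hz) hyz
    rw [this] at hylow
    linarith
  have hne : ∀ z ∈ Metric.ball (0 : ℂ) (1 / 4) \ {0}, f z - f (1 / 2) ≠ 0 := by
    intro z hz h0
    have := hfar z hz
    rw [h0, norm_zero] at this
    linarith
  set g : ℂ → ℂ := fun z => (f z - f (1 / 2))⁻¹ with hg
  have hgd : ∀ᶠ z in nhdsWithin (0 : ℂ) {0}ᶜ, DifferentiableAt ℂ g z := by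
    filter_upwards [hsmall] with z hz
    exact ((hf.differentiableAt (hopen.mem_nhds (hsub hz))).sub_const _).inv (hne z hz)
  have hgb : IsBoundedUnder (· ≤ ·) (nhdsWithin (0 : ℂ) {0}ᶜ) fun z => ‖g z - g 0‖ := by
    refine isBoundedUnder_of_eventually_le (a := δ⁻¹ + ‖g 0‖) ?_
    filter_upwards [hsmall] with z hz
    refine (norm_sub_le _ _).trans (add_le_add_left ?_ _)
    rw [hg]
    simp only [norm_inv]
    exact inv_anti₀ hδ (hfar z hz)
  have hlim :=
    Complex.tendsto_limUnder_of_differentiable_on_punctured_nhds_of_bounded_under hgd hgb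
  generalize limUnder (nhdsWithin (0 : ℂ) {0}ᶜ) g = L at hlim
  by_cases hL : L = 0
  · right
    subst hL
    have h1 : Tendsto (fun z => ‖g z‖) (nhdsWithin 0 {0}ᶜ) (nhdsWithin 0 (Set.Ioi 0)) := by
      refine tendsto_nhdsWithin_iff.2 ⟨by simpa using hlim.norm, ?_⟩
      filter_upwards [hsmall] with z hz
      exact norm_pos_iff.2 (inv_ne_zero (hne z hz))
    have h2 := h1.inv_tendsto_nhdsGT_zero
    have h3 := tendsto_atTop_add_const_right _ (-‖f (1 / 2)‖) h2
    refine tendsto_atTop_mono (fun z => ?_) h3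
    have := norm_sub_le (f z) (f (1 / 2))
    simp only [hg, Pi.inv_apply, norm_inv, inv_inv]
    linarith
  · left
    have h1 : Tendsto (fun z => ‖(g z)⁻¹ + f (1 / 2)‖) (nhdsWithin 0 {0}ᶜ)
        (nhds ‖L⁻¹ + f (1 / 2)‖) := ((hlim.inv₀ hL).add_const _).norm
    have h2 := h1.eventually (gt_mem_nhds (lt_add_one _))
    obtain ⟨ε, hε, hsubε⟩ := Metric.mem_nhdsWithin_iff.1 h2
    refine ⟨min ε 1, by positivity, min_le_right _ _, ‖L⁻¹ + f (1 / 2)‖ + 1, fun z hz => ?_⟩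
    have := hsubε ⟨Metric.ball_subset_ball (min_le_left _ _) hz.1, hz.2⟩
    simp only [hg, inv_inv, sub_add_cancel, Set.mem_setOf_eq] at this
    exact this.le
end

section
/- Let f be holomorphic and injective on the punctured unit disc D \ {0} = {z ∈ ℂ : 0 < ‖z‖ < 1}, and suppose ‖f(z)‖ → ∞ as z → 0. Then the pole of f at 0 is simple: the function z ↦ z·f(z) extends holomorphically across 0 with a nonzero value at 0. -/
open Filter

lemma aux_not_inj (k : ℂ → ℂ) (hk : AnalyticAt ℂ k 0) (hk0 : k 0 ≠ 0) (n : ℕ) (hn : 2 ≤ n)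
    (P : ℂ → Prop) (hP : ∀ᶠ z in nhds (0:ℂ), P z) :
    ∃ x y : ℂ, P x ∧ P y ∧ x ≠ 0 ∧ y ≠ 0 ∧ x ≠ y ∧ x ^ n * k x = y ^ n * k y := by
  have hn0 : n ≠ 0 := by omega
  set r : ℂ → ℂ := fun z => (k z / k 0) ^ ((n : ℂ)⁻¹) with hr
  have hra : AnalyticAt ℂ r 0 := by
    refine AnalyticAt.cpow (hk.div analyticAt_const hk0) analyticAt_const ?_
    simp [hk0]
  have hr0 : r 0 = 1 := by simp [hr, hk0]
  have hrn : ∀ z, r z ^ n = k z / k 0 := fun z => Complex.cpow_nat_inv_pow _ hn0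
  set φ : ℂ → ℂ := fun z => z * r z with hφ
  have hφa : AnalyticAt ℂ φ 0 := analyticAt_id.mul hra
  have hφ0 : φ 0 = 0 := by simp [hφ]
  have hrne : ∀ᶠ z in nhds (0:ℂ), r z ≠ 0 :=
    hra.continuousAt.eventually_ne (by rw [hr0]; exact one_ne_zero)
  have hopen : nhds (0:ℂ) ≤ map φ (nhds 0) := by
    rcases hφa.eventually_constant_or_nhds_le_map_nhds with h | h
    · exfalso
      have h2 : ∀ᶠ z in nhdsWithin (0:ℂ) {0}ᶜ, False := by
        filter_upwards [h.filter_mono nhdsWithin_le_nhds, hrne.filter_mono nhdsWithin_le_nhds,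
          self_mem_nhdsWithin] with z h1 h2 h3
        rw [hφ0] at h1
        exact (mul_ne_zero h3 h2) h1
      simpa using h2.exists
    · rwa [hφ0] at h
  have himg : ∀ᶠ w in nhds (0:ℂ), ∃ z, P z ∧ φ z = w := by
    have : φ '' {z | P z} ∈ map φ (nhds 0) := image_mem_map hP
    exact hopen this
  set ζ : ℂ := Complex.exp (2 * Real.pi * Complex.I / n) with hζ
  have hprim : IsPrimitiveRoot ζ n := Complex.isPrimitiveRoot_exp n hn0
  have himg2 : ∀ᶠ w in nhds (0:ℂ), ∃ z, P z ∧ φ z = ζ * w := by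
    have ht : Tendsto (fun w : ℂ => ζ * w) (nhds 0) (nhds 0) := by
      have : Continuous (fun w : ℂ => ζ * w) := by fun_prop
      simpa using this.tendsto 0
    exact ht.eventually himg
  have hex : ∃ᶠ w in nhdsWithin (0:ℂ) {0}ᶜ, True := by simp; infer_instance
  obtain ⟨w, -, ⟨⟨x, hx, hxw⟩, y, hy, hyw⟩, hw⟩ := (hex.and_eventually
    (((himg.and himg2).filter_mono nhdsWithin_le_nhds).and self_mem_nhdsWithin)).exists
  have hw : w ≠ 0 := hw
  have hζ0 : ζ ≠ 0 := Complex.exp_ne_zero _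
  refine ⟨x, y, hx, hy, ?_, ?_, ?_, ?_⟩
  · rintro rfl; exact hw (hxw ▸ hφ0)
  · rintro rfl; exact mul_ne_zero hζ0 hw (hyw ▸ hφ0)
  · rintro rfl
    rw [hxw] at hyw
    exact hprim.ne_one (by omega) (mul_right_cancel₀ hw (by rw [one_mul]; exact hyw.symm))
  · have key : ∀ z, z ^ n * k z = φ z ^ n * k 0 := by
      intro z
      simp only [hφ, mul_pow, hrn]
      field_simp
    rw [key, key, hxw, hyw, mul_pow, hprim.pow_eq_one, one_mul]

/-- An injective holomorphic function on the punctured unit disc with a pole at `0` has a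
simple pole there: `z ↦ z·f(z)` extends holomorphically across `0` with nonzero value at
`0`. -/
theorem injective_holomorphic_pole_is_simple
    (f : ℂ → ℂ)
    (hf : DifferentiableOn ℂ f (Metric.ball (0 : ℂ) 1 \ {0}))
    (hinj : Set.InjOn f (Metric.ball (0 : ℂ) 1 \ {0}))
    (hpole : Tendsto (fun z => ‖f z‖) (nhdsWithin 0 {0}ᶜ) atTop) :
    ∃ g : ℂ → ℂ, DifferentiableOn ℂ g (Metric.ball (0 : ℂ) 1) ∧ g 0 ≠ 0 ∧
      ∀ z ∈ Metric.ball (0 : ℂ) 1 \ {0}, g z = z * f z := by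
  have hopen : IsOpen (Metric.ball (0 : ℂ) 1 \ {0}) :=
    Metric.isOpen_ball.sdiff isClosed_singleton
  have hball : ∀ᶠ z in nhds (0:ℂ), z ∈ Metric.ball (0 : ℂ) 1 :=
    Metric.ball_mem_nhds _ one_pos
  have hne : ∀ᶠ z in nhdsWithin (0:ℂ) {0}ᶜ, f z ≠ 0 := by
    filter_upwards [hpole.eventually_gt_atTop 0] with z hz
    exact norm_pos_iff.1 hz
  set h : ℂ → ℂ := Function.update (fun z => (f z)⁻¹) 0 0 with hh
  have h0 : h 0 = 0 := by simp [hh]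
  have hz : ∀ z, z ≠ 0 → h z = (f z)⁻¹ := fun z hz => by simp [hh, hz]
  have hc : ContinuousAt h 0 := by
    rw [hh, continuousAt_update_same]
    exact tendsto_inv₀_cobounded.comp (tendsto_norm_atTop_iff_cobounded.1 hpole)
  have ha : AnalyticAt ℂ h 0 := by
    refine Complex.analyticAt_of_differentiable_on_punctured_nhds_of_continuousAt ?_ hc
    filter_upwards [hne, hball.filter_mono nhdsWithin_le_nhds, self_mem_nhdsWithin]
      with z h1 h2 h3
    have hd : DifferentiableAt ℂ f z := hf.differentiableAt (hopen.mem_nhds ⟨h2, h3⟩)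
    refine (hd.inv h1).congr_of_eventuallyEq ?_
    filter_upwards [isOpen_ne.mem_nhds h3] with w hw
    exact hz w hw
  have hord : analyticOrderAt h 0 ≠ ⊤ := by
    intro ht
    rw [analyticOrderAt_eq_top] at ht
    have h2 : ∀ᶠ z in nhdsWithin (0:ℂ) {0}ᶜ, False := by
      filter_upwards [hne, ht.filter_mono nhdsWithin_le_nhds, self_mem_nhdsWithin]
        with z h1 h2 h3
      rw [hz z h3] at h2
      exact inv_ne_zero h1 h2
    simpa using h2.exists
  obtain ⟨k, hk, hk0, hkn⟩ := ha.analyticOrderAt_ne_top.1 hord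
  generalize analyticOrderNatAt h 0 = n at hkn
  simp only [sub_zero, smul_eq_mul] at hkn
  have hn1 : n = 1 := by
    have hnz : n ≠ 0 := by
      rintro rfl
      have := hkn.self_of_nhds
      simp [h0] at this
      exact hk0 this.symm
    by_contra hn
    obtain ⟨x, y, ⟨hx, hxb⟩, ⟨hy, hyb⟩, hx0, hy0, hxy, he⟩ := aux_not_inj k hk hk0 n (by omega) _
      (Filter.Eventually.and hkn hball)
    simp only at hx hy
    rw [← hx, ← hy, hz x hx0, hz y hy0] at he
    exact hxy (hinj ⟨hxb, hx0⟩ ⟨hyb, hy0⟩ (inv_injective he))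
  subst hn1
  refine ⟨Function.update (fun z => z * f z) 0 (k 0)⁻¹, ?_, by simp [hk0], ?_⟩
  · intro z hzb
    apply DifferentiableAt.differentiableWithinAt
    by_cases hz0 : z = 0
    · subst hz0
      refine (hk.differentiableAt.inv hk0).congr_of_eventuallyEq ?_
      filter_upwards [hkn] with w hw
      by_cases hw0 : w = 0
      · subst hw0; simp
      · rw [hz w hw0, pow_one] at hw
        rw [Function.update_of_ne hw0, ← inv_inv (f w), hw]
        rw [mul_inv, mul_inv_cancel_left₀ hw0, Pi.inv_apply]
    · have hd : DifferentiableAt ℂ f z := hf.differentiableAt (hopen.mem_nhds ⟨hzb, hz0⟩)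
      refine (differentiableAt_id.mul hd).congr_of_eventuallyEq ?_
      filter_upwards [isOpen_ne.mem_nhds hz0] with w hw
      simp [Function.update_of_ne hw]
  · intro z hz'
    exact Function.update_of_ne hz'.2 _ _
end
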